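/- There is a constant c > 0 such that for every n ≥ 2, every face-convex good drawing of K_n in the sphere has at least n² − c·n·log n empty triangles. -/

import Mathlib

open Set Topology

noncomputable section

abbrev Plane : Type := EuclideanSpace ℝ (Fin 2)

abbrev SpherePt : Type := ↥(Metric.sphere (0 : EuclideanSpace ℝ (Fin 3)) 1)

/-- `γ` crosses the curve `σ` at `p`: `p` lies on both sets, and in every neighbourhood of `p`
there is a smaller neighbourhood `V` such that `V \ σ` splits into two connected "sides",
both of which meet `γ`. -/
def CrossesAt {X : Type*} [TopologicalSpace X] (σ γ : Set X) (p : X) : Prop :=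
  p ∈ σ ∧ p ∈ γ ∧ ∀ U ∈ nhds p, ∃ V ∈ nhds p, V ⊆ U ∧
    ∃ C₁ C₂ : Set X, V \ σ = C₁ ∪ C₂ ∧ Disjoint C₁ C₂ ∧
      IsPreconnected C₁ ∧ IsPreconnected C₂ ∧ (γ ∩ C₁).Nonempty ∧ (γ ∩ C₂).Nonempty

/-- `Δ` is one of the closed regions ("closed discs") bounded by the curve `C`:
it is the union of `C` with a connected component of the complement of `C`. -/
def IsClosedSide {X : Type*} [TopologicalSpace X] (C Δ : Set X) : Prop :=
  ∃ q, q ∉ C ∧ Δ = connectedComponentIn Cᶜ q ∪ C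

/-- `Δ` is one of the open regions ("open discs") bounded by the curve `C`. -/
def IsOpenSide {X : Type*} [TopologicalSpace X] (C Δ : Set X) : Prop :=
  ∃ q, q ∉ C ∧ Δ = connectedComponentIn Cᶜ q

/-- `G` is a face (a connected component of the complement) of the point set `A`. -/
def IsFaceOf {X : Type*} [TopologicalSpace X] (A G : Set X) : Prop :=
  ∃ q, q ∉ A ∧ G = connectedComponentIn Aᶜ q

/-- A good drawing of the complete graph `K_n` in the space `X`. -/
structure GoodDrawing (n : ℕ) (X : Type*) [TopologicalSpace X] where
  vtx : Fin n → X
  arc : Fin n → Fin n → Set X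
  vtx_inj : Function.Injective vtx
  arc_symm : ∀ u v, arc u v = arc v u
  isArc : ∀ u v, u ≠ v → ∃ f : ℝ → X, ContinuousOn f (Set.Icc 0 1) ∧
    Set.InjOn f (Set.Icc 0 1) ∧ f 0 = vtx u ∧ f 1 = vtx v ∧ arc u v = f '' Set.Icc 0 1
  vtx_not_mem : ∀ u v w, u ≠ v → w ≠ u → w ≠ v → vtx w ∉ arc u v
  adj_arcs : ∀ u v w, u ≠ v → u ≠ w → v ≠ w → arc u v ∩ arc u w = {vtx u}
  indep_arcs : ∀ u v x y : Fin n, u ≠ v → x ≠ y → u ≠ x → u ≠ y → v ≠ x → v ≠ y →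
    (arc u v ∩ arc x y).Subsingleton ∧
      ∀ p ∈ arc u v ∩ arc x y,
        CrossesAt (arc u v) (arc x y) p ∧ CrossesAt (arc x y) (arc u v) p
  no_triple_pt : ∀ p : X, p ∉ Set.range vtx → ∀ u v x y s t : Fin n,
    u ≠ v → x ≠ y → s ≠ t →
    ({u, v} : Finset (Fin n)) ≠ {x, y} → ({u, v} : Finset (Fin n)) ≠ {s, t} →
    ({x, y} : Finset (Fin n)) ≠ {s, t} →
    ¬(p ∈ arc u v ∧ p ∈ arc x y ∧ p ∈ arc s t)

namespace GoodDrawing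

variable {n : ℕ} {X : Type*} [TopologicalSpace X]

/-- The point set of the subdrawing induced by the set `W` of vertices. -/
def image (D : GoodDrawing n X) (W : Set (Fin n)) : Set X :=
  (D.vtx '' W) ∪ ⋃ u ∈ W, ⋃ v ∈ W, ⋃ (_ : u ≠ v), D.arc u v

/-- The simple closed curve that is the drawing of the 3-cycle on `a`, `b`, `c`. -/
def tri (D : GoodDrawing n X) (a b c : Fin n) : Set X :=
  D.arc a b ∪ D.arc b c ∪ D.arc a c

/-- `Δ` is convex: it contains the arc between any two vertex points it contains. -/
def ConvexDisc (D : GoodDrawing n X) (Δ : Set X) : Prop :=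
  ∀ x y : Fin n, x ≠ y → D.vtx x ∈ Δ → D.vtx y ∈ Δ → D.arc x y ⊆ Δ

/-- `F` is a face of the drawing `D`. -/
def IsFace (D : GoodDrawing n X) (F : Set X) : Prop :=
  IsFaceOf (D.image Set.univ) F

/-- `D` is face-convex with outer face `F`. -/
def FaceConvex (D : GoodDrawing n X) (F : Set X) : Prop :=
  D.IsFace F ∧ ∀ a b c : Fin n, a ≠ b → a ≠ c → b ≠ c →
    ∀ Δ : Set X, IsClosedSide (D.tri a b c) Δ → ¬F ⊆ Δ → D.ConvexDisc Δ

/-- `D` is a convex drawing: every 3-cycle has at least one convex closed side. -/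
def IsConvex (D : GoodDrawing n X) : Prop :=
  ∀ a b c : Fin n, a ≠ b → a ≠ c → b ≠ c →
    ∃ Δ : Set X, IsClosedSide (D.tri a b c) Δ ∧ D.ConvexDisc Δ

/-- The closed curve drawn by the cycle `c 0, c 1, …, c (m-1), c 0` of `K_n`. -/
def cycCurve (D : GoodDrawing n X) {m : ℕ} [NeZero m] (c : Fin m → Fin n) : Set X :=
  ⋃ i : Fin m, D.arc (c i) (c (i + 1))

/-- `Δ` is the convex hull `Δ_W` of the vertex set `W` (relative to the outer face `F`):
the face of the subdrawing `D[W]` containing `F` is bounded by a cycle `C_W` on vertices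
of `W`, and `Δ` is the closed disc bounded by `D[C_W]` disjoint from `F`. -/
def IsHull (D : GoodDrawing n X) (F : Set X) (W : Set (Fin n)) (Δ : Set X) : Prop :=
  ∃ (m : ℕ) (c : Fin (m + 3) → Fin n), Function.Injective c ∧ (∀ i, c i ∈ W) ∧
    (∃ G : Set X, IsFaceOf (D.image W) G ∧ F ⊆ G ∧ frontier G = D.cycCurve c) ∧
    IsClosedSide (D.cycCurve c) Δ ∧ Disjoint F Δ

/-- The data of the two local sides `C 0`, `C 1` of the arc `D[uv]` at an interior
point `p` of the arc. -/
def LocalSides (D : GoodDrawing n X) (u v : Fin n) (p : X) (C : Fin 2 → Set X) : Prop :=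
  p ∈ D.arc u v ∧ p ≠ D.vtx u ∧ p ≠ D.vtx v ∧
    ∃ V ∈ nhds p, C 0 ∪ C 1 = V \ D.arc u v ∧ Disjoint (C 0) (C 1) ∧
      IsPreconnected (C 0) ∧ IsPreconnected (C 1) ∧ (C 0).Nonempty ∧ (C 1).Nonempty

/-- Relative to the outer face `F` and the local sides `C` of `D[uv]` at `p`, the
vertex `w` is on side `i` of `uv`: the closed disc bounded by `D[{u,v,w}]` not
containing `F` lies locally on side `i` of `D[uv]`. -/
def OnSide (D : GoodDrawing n X) (F : Set X) (u v : Fin n) (p : X) (C : Fin 2 → Set X)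
    (i : Fin 2) (w : Fin n) : Prop :=
  w ≠ u ∧ w ≠ v ∧ ∃ Δ : Set X, IsClosedSide (D.tri u v w) Δ ∧ ¬F ⊆ Δ ∧
    ∃ V ∈ nhds p, C i ∩ V ⊆ Δ

/-- `Side(uv, i)`: the set consisting of `u`, `v` and all vertices on side `i` of `uv`. -/
def SideSet (D : GoodDrawing n X) (F : Set X) (u v : Fin n) (p : X) (C : Fin 2 → Set X)
    (i : Fin 2) : Set (Fin n) :=
  {u, v} ∪ {w : Fin n | D.OnSide F u v p C i w}

/-- The edge-arcs `D[uv]` and `D[xy]` cross: they share a non-vertex point. -/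
def Crosses (D : GoodDrawing n X) (u v x y : Fin n) : Prop :=
  ∃ p : X, p ∈ D.arc u v ∩ D.arc x y ∧ p ∉ Set.range D.vtx

/-- The set of empty triangles of `D`: pairs of a 3-set of vertices together with an
open disc bounded by the corresponding triangle containing no vertex point. -/
def emptyTriangles (D : GoodDrawing n X) : Set (Finset (Fin n) × Set X) :=
  {T | ∃ a b c : Fin n, a ≠ b ∧ a ≠ c ∧ b ≠ c ∧ T.1 = {a, b, c} ∧
    IsOpenSide (D.tri a b c) T.2 ∧ ∀ i, D.vtx i ∉ T.2}

end GoodDrawing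

/-- A pseudoline in the plane. -/
def IsPseudoline (σ : Set Plane) : Prop :=
  IsClosed σ ∧ Nonempty (↥σ ≃ₜ ℝ) ∧ ¬IsPreconnected σᶜ

/-- An arrangement of pseudolines: any two distinct members meet in exactly one
point, at which they cross. -/
def IsArrangement (A : Finset (Set Plane)) : Prop :=
  (∀ σ ∈ A, IsPseudoline σ) ∧
    ∀ σ ∈ A, ∀ τ ∈ A, σ ≠ τ →
      ∃ p : Plane, σ ∩ τ = {p} ∧ CrossesAt σ τ p ∧ CrossesAt τ σ p

/-- A planar good drawing of `K_n` is pseudolinear if some arrangement of pseudolines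
contains, for each edge, a distinct pseudoline containing that edge-arc. -/
def GoodDrawing.Pseudolinear {n : ℕ} (D : GoodDrawing n Plane) : Prop :=
  ∃ (A : Finset (Set Plane)) (L : Fin n → Fin n → Set Plane), IsArrangement A ∧
    (∀ u v, u ≠ v → L u v ∈ A ∧ D.arc u v ⊆ L u v) ∧
    (∀ u v, L u v = L v u) ∧
    ∀ u v x y : Fin n, u ≠ v → x ≠ y →
      ({u, v} : Finset (Fin n)) ≠ {x, y} → L u v ≠ L x y

section

namespace FC

/-- A continuous function with `exp g = 1` on a preconnected set is constant. -/
lemma exp_one_const {X : Type*} [TopologicalSpace X] {s : Set X} (hs : IsPreconnected s)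
    {g : X → ℂ} (hg : ContinuousOn g s) (h1 : ∀ x ∈ s, Complex.exp (g x) = 1)
    {x y : X} (hx : x ∈ s) (hy : y ∈ s) : g x = g y := by
  have hd : DiscreteTopology (AddSubgroup.zmultiples (2 * Real.pi * Complex.I)) :=
    NormedSpace.discreteTopology_zmultiples _
  have hm : MapsTo g s ((AddSubgroup.zmultiples (2 * Real.pi * Complex.I) : AddSubgroup ℂ) : Set ℂ) := by
    intro x hx
    obtain ⟨n, hn⟩ := Complex.exp_eq_one_iff.1 (h1 x hx)
    exact AddSubgroup.mem_zmultiples_iff.2 ⟨n, by rw [hn]; simp⟩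
  exact hs.constant_of_mapsTo ⟨hd⟩ hg hm hx hy

/-- No continuous logarithm of `(z - A)^m` on a circle, for `m ≠ 0`. -/
lemma no_log_circle {A : ℂ} {r : ℝ} (hr : 0 < r) {m : ℤ} {l : ℂ → ℂ}
    (hl : ContinuousOn l (Metric.sphere A r))
    (he : ∀ z ∈ Metric.sphere A r, Complex.exp (l z) = (z - A) ^ m) : m = 0 := by
  have hz : ∀ t : ℝ, A + r * Complex.exp (t * Complex.I) ∈ Metric.sphere A r := by
    intro t
    simp [Complex.norm_exp_ofReal_mul_I, abs_of_pos hr]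
  have hc : Continuous fun t : ℝ => l (A + r * Complex.exp (t * Complex.I)) :=
    hl.comp_continuous (by fun_prop) hz
  have hr' : (r : ℂ) ≠ 0 := by exact_mod_cast hr.ne'
  have key := exp_one_const (X := ℝ) (s := univ) isPreconnected_univ
    (g := fun t : ℝ => l (A + r * Complex.exp (t * Complex.I)) -
      m * (Complex.log r + t * Complex.I)) (by
        exact (hc.sub (by fun_prop)).continuousOn) (by
        intro t _
        rw [Complex.exp_sub, he _ (hz t), Complex.exp_int_mul, Complex.exp_add, Complex.exp_log hr']
        simp only [add_sub_cancel_left]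
        apply div_self
        exact zpow_ne_zero _ (mul_ne_zero hr' (Complex.exp_ne_zero _)))
    (mem_univ (0 : ℝ)) (mem_univ (2 * Real.pi))
  simp only [Complex.ofReal_zero, zero_mul, Complex.exp_zero, Complex.ofReal_mul,
    Complex.ofReal_ofNat, Complex.exp_two_pi_mul_I] at key
  have : (m : ℂ) * (2 * Real.pi * Complex.I) = 0 := by linear_combination key
  have h2 : (2 * Real.pi * Complex.I : ℂ) ≠ 0 := Complex.two_pi_I_ne_zero
  rcases mul_eq_zero.1 this with h | h
  · exact_mod_cast h
  · exact absurd h h2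

/-- Nonvanishing continuous functions on the plane have logarithms. -/
lemma exists_log_plane {k : ℂ → ℂ} (hk : Continuous k) (h0 : ∀ z, k z ≠ 0) :
    ∃ l : ℂ → ℂ, Continuous l ∧ ∀ z, Complex.exp (l z) = k z := by
  obtain ⟨l, hl, -⟩ := (Complex.isCoveringMapOn_exp.existsUnique_continuousMap_lifts
    (⟨k, hk⟩ : C(ℂ, ℂ)) (a₀ := 0) (Complex.exp_log (h0 0)) (fun z => h0 z))
  refine ⟨l, l.continuous, fun z => ?_⟩
  exact congrFun hl.2 z

/-- Main non-existence lemma (Eilenberg). -/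
lemma eilenberg_plane {K V : Set ℂ} (hK : IsCompact K) (hV : IsOpen V)
    (hb : Bornology.IsBounded V) (hf : frontier V ⊆ K) {p : ℂ} (hp : p ∈ V) {m : ℤ}
    {u : ℂ → ℂ} (hu : ContinuousOn u (V ∪ K)) (hu0 : ∀ z ∈ V ∪ K, u z ≠ 0)
    {g : ℂ → ℂ} (hg : ContinuousOn g K)
    (he : ∀ z ∈ K, (z - p) ^ m * u z = Complex.exp (g z)) : m = 0 := by
  classical
  obtain ⟨G, hG⟩ := ContinuousMap.exists_restrict_eq (Y := ℂ) hK.isClosed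
    ⟨K.domRestrict g, continuousOn_iff_continuous_domRestrict.mp hg⟩
  have hGK : ∀ z ∈ K, G z = g z := fun z hz => by
    have := congrArg (fun f : C(K, ℂ) => f ⟨z, hz⟩) hG
    simpa using this
  set k : ℂ → ℂ := fun z => if z ∈ V then u z else Complex.exp (G z) / (z - p) ^ m with hkdef
  have hcl : closure V ⊆ V ∪ K := by
    intro z hz
    by_cases h : z ∈ V
    · exact Or.inl h
    · exact Or.inr (hf ⟨hz, by rwa [hV.interior_eq]⟩)
  have hk1 : ∀ z ∈ closure V, k z = u z := by
    intro z hz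
    by_cases h : z ∈ V
    · simp [hkdef, h]
    · have hzK : z ∈ K := (hcl hz).resolve_left h
      have hzp : z - p ≠ 0 := sub_ne_zero.2 (fun e => h (e ▸ hp))
      simp only [hkdef, h, if_false]
      rw [hGK z hzK, ← he z hzK]
      field_simp
  have hk2 : ∀ z ∈ Vᶜ, k z = Complex.exp (G z) / (z - p) ^ m := by
    intro z hz
    have hz' : z ∉ V := hz
    simp [hkdef, hz']
  have hkc : Continuous k := by
    rw [← continuousOn_univ]
    have hun : (univ : Set ℂ) = closure V ∪ Vᶜ := by
      ext z; simp only [mem_univ, mem_union, true_iff]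
      by_cases h : z ∈ V
      · exact Or.inl (subset_closure h)
      · exact Or.inr h
    rw [hun]
    refine ContinuousOn.union_of_isClosed ?_ ?_ isClosed_closure hV.isClosed_compl
    · exact (hu.mono hcl).congr hk1
    · refine ContinuousOn.congr ?_ hk2
      refine ContinuousOn.div (by fun_prop) ?_ ?_
      · refine ContinuousOn.zpow₀ (by fun_prop) _ ?_
        intro z hz
        exact Or.inl (sub_ne_zero.2 (fun e => hz (e ▸ hp)))
      · intro z hz
        exact zpow_ne_zero _ (sub_ne_zero.2 (fun e => hz (e ▸ hp)))
  have hk0 : ∀ z, k z ≠ 0 := by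
    intro z
    by_cases h : z ∈ V
    · rw [hk1 z (subset_closure h)]; exact hu0 z (Or.inl h)
    · rw [hk2 z h]
      exact div_ne_zero (Complex.exp_ne_zero _)
        (zpow_ne_zero _ (sub_ne_zero.2 (fun e => h (e ▸ hp))))
  obtain ⟨l, hl, hle⟩ := exists_log_plane hkc hk0
  obtain ⟨R, hR⟩ := hb.subset_ball p
  have hRpos : 0 < R := by
    have := hR hp
    simpa using this
  refine no_log_circle (A := p) hRpos (l := fun z => G z - l z) (by fun_prop) ?_
  intro z hz
  have hzV : z ∉ V := fun h => by
    have h1 := hR h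
    rw [Metric.mem_ball] at h1
    rw [Metric.mem_sphere] at hz
    linarith
  have hzp : z - p ≠ 0 := sub_ne_zero.2 (fun e => hzV (e ▸ hp))
  rw [Complex.exp_sub, hle, hk2 z hzV]
  field_simp [Complex.exp_ne_zero]

end FC

end

section

namespace FC

/-- `K` is log-trivial: nonvanishing continuous functions on `K` have continuous logarithms. -/
def LT {X : Type*} [TopologicalSpace X] (K : Set X) : Prop :=
  ∀ f : X → ℂ, ContinuousOn f K → (∀ x ∈ K, f x ≠ 0) →
    ∃ g : X → ℂ, ContinuousOn g K ∧ ∀ x ∈ K, Complex.exp (g x) = f x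

lemma LT_arc {X : Type*} [TopologicalSpace X] [T2Space X] [NormalSpace X] {f : ℝ → X} {s t : ℝ}
    (hst : s ≤ t)
    (hc : ContinuousOn f (Icc s t)) (hi : InjOn f (Icc s t)) : LT (f '' Icc s t) := by
  intro h hh h0
  have hpr : Continuous fun z : ℂ => f (projIcc s t hst z.re) := by
    refine hc.comp_continuous ?_ (fun z => (projIcc s t hst z.re).2)
    exact continuous_subtype_val.comp (continuous_projIcc.comp Complex.continuous_re)
  obtain ⟨l, hl, hle⟩ := exists_log_plane (k := fun z => h (f (projIcc s t hst z.re)))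
    (hh.comp_continuous hpr (fun z => mem_image_of_mem f (projIcc s t hst z.re).2))
    (fun z => h0 _ (mem_image_of_mem f (projIcc s t hst z.re).2))
  have hemb : IsClosedEmbedding (fun x : Icc s t => f x) :=
    Continuous.isClosedEmbedding (continuousOn_iff_continuous_domRestrict.1 hc)
      (fun x y hxy => Subtype.ext (hi x.2 y.2 hxy))
  obtain ⟨g, hg⟩ := ContinuousMap.exists_extension' (Y := ℂ) hemb
    ⟨fun x : Icc s t => l (x : ℝ), by fun_prop⟩
  refine ⟨g, g.continuous.continuousOn, ?_⟩
  rintro _ ⟨τ, hτ, rfl⟩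
  have h1 := congrFun hg ⟨τ, hτ⟩
  simp only [Function.comp_apply, ContinuousMap.coe_mk] at h1
  rw [h1, hle]
  simp [projIcc_of_mem hst hτ]

lemma exp_eq_sub {a b : ℂ} (h : Complex.exp a = Complex.exp b) :
    ∃ n : ℤ, a = b + n * (2 * Real.pi * Complex.I) := Complex.exp_eq_exp_iff_exists_int.1 h

lemma exp_int_period (n : ℤ) : Complex.exp (n * (2 * Real.pi * Complex.I)) = 1 :=
  Complex.exp_eq_one_iff.2 ⟨n, rfl⟩

open Classical in
lemma glue_closed {X : Type*} [TopologicalSpace X] {K₁ K₂ : Set X}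
    (h1 : IsClosed K₁) (h2 : IsClosed K₂) {g₁ g₂ : X → ℂ} (c1 : ContinuousOn g₁ K₁)
    (c2 : ContinuousOn g₂ K₂) (heq : ∀ x ∈ K₁ ∩ K₂, g₁ x = g₂ x) :
    ContinuousOn (fun x => if x ∈ K₁ then g₁ x else g₂ x) (K₁ ∪ K₂) := by
  refine ContinuousOn.union_of_isClosed ?_ ?_ h1 h2
  · exact c1.congr (fun x hx => by simp [hx])
  · refine c2.congr (fun x hx => ?_)
    by_cases h : x ∈ K₁
    · simp [h, heq x ⟨h, hx⟩]
    · simp [h]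

lemma LT_union {X : Type*} [TopologicalSpace X] {K₁ K₂ : Set X}
    (h1 : IsClosed K₁) (h2 : IsClosed K₂) (l1 : LT K₁) (l2 : LT K₂) {a : X}
    (hi : K₁ ∩ K₂ = {a}) : LT (K₁ ∪ K₂) := by
  classical
  intro f hf h0
  obtain ⟨g₁, c1, e1⟩ := l1 f (hf.mono subset_union_left) (fun x hx => h0 x (Or.inl hx))
  obtain ⟨g₂, c2, e2⟩ := l2 f (hf.mono subset_union_right) (fun x hx => h0 x (Or.inr hx))
  have ha : a ∈ K₁ ∩ K₂ := by rw [hi]; rfl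
  obtain ⟨n, hn⟩ := exp_eq_sub ((e1 a ha.1).trans (e2 a ha.2).symm)
  refine ⟨fun x => if x ∈ K₁ then g₁ x else (g₂ x + n * (2 * Real.pi * Complex.I)),
    glue_closed h1 h2 c1 (c2.add continuousOn_const) ?_, ?_⟩
  · intro x hx
    rw [hi] at hx
    rw [mem_singleton_iff.1 hx, hn]
  · intro x hx
    by_cases h : x ∈ K₁
    · simp [h, e1 x h]
    · have : x ∈ K₂ := hx.resolve_left h
      simp only [h, if_false]
      rw [Complex.exp_add, exp_int_period, mul_one, e2 x this]

/-- On a union of two log-trivial sets meeting in two points, a function has a logarithm up to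
an integer discrepancy. -/
lemma rank_one {X : Type*} [TopologicalSpace X] {K₁ K₂ : Set X}
    (h1 : IsClosed K₁) (h2 : IsClosed K₂) (l1 : LT K₁) (l2 : LT K₂) {a b : X}
    (hi : K₁ ∩ K₂ = {a, b}) {f₁ f₂ : X → ℂ} (hf1 : ContinuousOn f₁ (K₁ ∪ K₂))
    (hf2 : ContinuousOn f₂ (K₁ ∪ K₂)) (n1 : ∀ x ∈ K₁ ∪ K₂, f₁ x ≠ 0)
    (n2 : ∀ x ∈ K₁ ∪ K₂, f₂ x ≠ 0) :
    ∃ m n : ℤ, (m ≠ 0 ∨ n ≠ 0) ∧ ∃ g : X → ℂ, ContinuousOn g (K₁ ∪ K₂) ∧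
      ∀ x ∈ K₁ ∪ K₂, f₁ x ^ m * f₂ x ^ n = Complex.exp (g x) := by
  classical
  have ha : a ∈ K₁ ∩ K₂ := by rw [hi]; simp
  have hb : b ∈ K₁ ∩ K₂ := by rw [hi]; simp
  have main : ∀ f : X → ℂ, ContinuousOn f (K₁ ∪ K₂) → (∀ x ∈ K₁ ∪ K₂, f x ≠ 0) →
      ∃ (k : ℤ) (g₁ g₂ : X → ℂ), ContinuousOn g₁ K₁ ∧ ContinuousOn g₂ K₂ ∧
        (∀ x ∈ K₁, Complex.exp (g₁ x) = f x) ∧ (∀ x ∈ K₂, Complex.exp (g₂ x) = f x) ∧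
        g₁ a = g₂ a ∧ g₁ b = g₂ b + k * (2 * Real.pi * Complex.I) := by
    intro f hf h0
    obtain ⟨g₁, c1, e1⟩ := l1 f (hf.mono subset_union_left) (fun x hx => h0 x (Or.inl hx))
    obtain ⟨g₂, c2, e2⟩ := l2 f (hf.mono subset_union_right) (fun x hx => h0 x (Or.inr hx))
    obtain ⟨n, hn⟩ := exp_eq_sub ((e1 a ha.1).trans (e2 a ha.2).symm)
    obtain ⟨k, hk⟩ := exp_eq_sub ((e1 b hb.1).trans (e2 b hb.2).symm)
    refine ⟨k - n, g₁, fun x => g₂ x + n * (2 * Real.pi * Complex.I), c1,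
      c2.add continuousOn_const, e1, ?_, hn, ?_⟩
    · intro x hx
      rw [Complex.exp_add, exp_int_period, mul_one, e2 x hx]
    · rw [hk]; push_cast; ring
  obtain ⟨k, g₁, g₂, c1, c2, e1, e2, eqa, eqb⟩ := main f₁ hf1 n1
  obtain ⟨l, g₃, g₄, c3, c4, e3, e4, eqa', eqb'⟩ := main f₂ hf2 n2
  have fin : ∀ m n : ℤ, m * k + n * l = 0 → ∃ g : X → ℂ, ContinuousOn g (K₁ ∪ K₂) ∧
      ∀ x ∈ K₁ ∪ K₂, f₁ x ^ m * f₂ x ^ n = Complex.exp (g x) := by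
    intro m n hmn
    have hmn' : (m : ℂ) * k + n * l = 0 := by exact_mod_cast hmn
    refine ⟨fun x => if x ∈ K₁ then (m * g₁ x + n * g₃ x) else (m * g₂ x + n * g₄ x),
      glue_closed h1 h2 (by fun_prop) (by fun_prop) ?_, ?_⟩
    · intro x hx
      rw [hi] at hx
      rcases hx with rfl | hx
      · rw [eqa, eqa']
      · rw [mem_singleton_iff.1 hx, eqb, eqb']
        linear_combination (2 * Real.pi * Complex.I) * hmn'
    · intro x hx
      by_cases h : x ∈ K₁
      · simp only [h, if_true]
        rw [Complex.exp_add, Complex.exp_int_mul, Complex.exp_int_mul, e1 x h, e3 x h]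
      · have h' : x ∈ K₂ := hx.resolve_left h
        simp only [h, if_false]
        rw [Complex.exp_add, Complex.exp_int_mul, Complex.exp_int_mul, e2 x h', e4 x h']
  by_cases hk : k = 0
  · exact ⟨1, 0, Or.inl one_ne_zero, fin 1 0 (by simp [hk])⟩
  · exact ⟨l, -k, Or.inr (neg_ne_zero.2 hk), fin l (-k) (by ring)⟩

/-- A planar chart of the complement of a point `q`. -/
structure Chart (S : Type*) [TopologicalSpace S] (q : S) where
  φ : S → ℂ
  ψ : ℂ → S
  hφ : ContinuousOn φ {q}ᶜ
  hψ : Continuous ψ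
  ne : ∀ z, ψ z ≠ q
  left : ∀ x, x ≠ q → ψ (φ x) = x
  right : ∀ z, φ (ψ z) = z

variable {S : Type*} [TopologicalSpace S] [CompactSpace S] [T2Space S] {q : S}

lemma Chart.inj (C : Chart S q) {x y : S} (hx : x ≠ q) (hy : y ≠ q) (h : C.φ x = C.φ y) : x = y := by
  rw [← C.left x hx, ← C.left y hy, h]

lemma Chart.image_eq (C : Chart S q) {A : Set S} (hA : q ∉ A) : C.φ '' A = C.ψ ⁻¹' A := by
  ext z
  constructor
  · rintro ⟨x, hx, rfl⟩
    rw [mem_preimage, C.left x (fun e => hA (e ▸ hx))]; exact hx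
  · intro hz
    exact ⟨C.ψ z, hz, C.right z⟩

lemma eilenberg_sphere (C : Chart S q) {K V : Set S} (hK : IsClosed K) (hqK : q ∉ K)
    (hV : IsOpen V) (hqV : q ∉ V) (hf : frontier V ⊆ K) {p : S} (hp : p ∈ V) {m : ℤ}
    {u : S → ℂ} (hu : ContinuousOn u (V ∪ K)) (hu0 : ∀ z ∈ V ∪ K, u z ≠ 0)
    {g : S → ℂ} (hg : ContinuousOn g K)
    (he : ∀ z ∈ K, (C.φ z - C.φ p) ^ m * u z = Complex.exp (g z)) : m = 0 := by
  have hcl : closure V ⊆ V ∪ K := by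
    intro z hz
    by_cases h : z ∈ V
    · exact Or.inl h
    · exact Or.inr (hf ⟨hz, by rwa [hV.interior_eq]⟩)
  have hqc : q ∉ closure V := fun h => (hcl h).elim hqV hqK
  have hsub : ∀ {A : Set S}, q ∉ A → A ⊆ {q}ᶜ := fun hA x hx e => hA (e ▸ hx)
  have hKc : IsCompact (C.φ '' K) := hK.isCompact.image_of_continuousOn (C.hφ.mono (hsub hqK))
  have hcc : IsCompact (C.φ '' closure V) :=
    isClosed_closure.isCompact.image_of_continuousOn (C.hφ.mono (hsub hqc))
  have hpq : p ≠ q := fun e => hqV (e ▸ hp)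
  refine eilenberg_plane (K := C.φ '' K) (V := C.φ '' V) hKc ?_ ?_ ?_ (p := C.φ p) ⟨p, hp, rfl⟩
    (m := m) (u := u ∘ C.ψ) (g := g ∘ C.ψ) ?_ ?_ ?_ ?_
  · rw [C.image_eq hqV]; exact hV.preimage C.hψ
  · exact hcc.isBounded.subset (image_mono subset_closure)
  · intro z hz
    have hz1 : z ∈ C.φ '' closure V :=
      closure_minimal (image_mono subset_closure) hcc.isClosed hz.1
    obtain ⟨x, hx, rfl⟩ := hz1
    refine ⟨x, (hcl hx).resolve_left fun hxV => hz.2 ?_, rfl⟩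
    rw [IsOpen.interior_eq]
    · exact ⟨x, hxV, rfl⟩
    · rw [C.image_eq hqV]; exact hV.preimage C.hψ
  · rw [← image_union, C.image_eq (fun h => h.elim hqV hqK)]
    exact hu.comp C.hψ.continuousOn (fun z hz => hz)
  · rw [← image_union, C.image_eq (fun h => h.elim hqV hqK)]
    intro z hz
    exact hu0 _ hz
  · rw [C.image_eq hqK]
    exact hg.comp C.hψ.continuousOn (fun z hz => hz)
  · rw [C.image_eq hqK]
    intro z hz
    have := he _ hz
    rw [C.right] at this
    exact this

/-- Log-trivial sets do not separate. -/
lemma LT_no_sep (C : Chart S q) {K V : Set S} (hK : IsClosed K) (hqK : q ∉ K) (hLT : LT K)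
    (hV : IsOpen V) (hqV : q ∉ V) (hf : frontier V ⊆ K) (hd : Disjoint V K) : V = ∅ := by
  by_contra hne
  obtain ⟨p, hp⟩ := nonempty_iff_ne_empty.2 hne
  have hpK : p ∉ K := fun h => disjoint_left.1 hd hp h
  obtain ⟨g, hg, hge⟩ := hLT (fun x => C.φ x - C.φ p)
    ((C.hφ.mono fun x hx e => hqK (e ▸ hx)).sub continuousOn_const) (by
      intro x hx h
      apply hpK
      rw [← C.inj (fun e => hqK (e ▸ hx)) (fun e => hqV (e ▸ hp)) (sub_eq_zero.1 h)]
      exact hx)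
  have := eilenberg_sphere C hK hqK hV hqV hf hp (m := 1) (u := fun _ => 1) continuousOn_const
    (fun _ _ => one_ne_zero) hg (by intro z hz; simp [hge z hz])
  exact one_ne_zero this

end FC

end

section

namespace FC

variable {S : Type*} [TopologicalSpace S] [CompactSpace S] [T2Space S] {q : S}

lemma Chart.tendsto (C : Chart S q) : Filter.Tendsto (fun x => ‖C.φ x‖) (𝓝[≠] q) Filter.atTop := by
  rw [Filter.tendsto_atTop]
  intro R
  have hc : IsCompact (C.ψ '' Metric.closedBall 0 R) :=
    (isCompact_closedBall 0 R).image C.hψ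
  have hq : (C.ψ '' Metric.closedBall 0 R)ᶜ ∈ 𝓝 q := by
    apply hc.isClosed.isOpen_compl.mem_nhds
    rintro ⟨z, -, hz⟩
    exact C.ne z hz
  filter_upwards [nhdsWithin_le_nhds hq, self_mem_nhdsWithin] with x hx hxq
  by_contra hlt
  apply hx
  refine ⟨C.φ x, ?_, C.left x hxq⟩
  simp only [Metric.mem_closedBall, dist_zero_right]
  exact le_of_not_ge hlt

open Classical in
/-- The function `1 / (φ a - φ x)`, extended by `0` at `q`. -/
def Chart.iota (C : Chart S q) (a : S) (x : S) : ℂ := if x = q then 0 else (C.φ a - C.φ x)⁻¹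

lemma Chart.iota_q (C : Chart S q) (a : S) : C.iota a q = 0 := by simp [Chart.iota]

lemma Chart.iota_ne (C : Chart S q) (a : S) {x : S} (h : x ≠ q) :
    C.iota a x = (C.φ a - C.φ x)⁻¹ := by simp [Chart.iota, h]

lemma Chart.iota_cont (C : Chart S q) {a : S} (ha : a ≠ q) : ContinuousOn (C.iota a) {a}ᶜ := by
  intro x hx
  by_cases hxq : x = q
  · subst hxq
    apply ContinuousAt.continuousWithinAt
    rw [continuousAt_iff_punctured_nhds, C.iota_q]
    have h1 : Filter.Tendsto (fun y => ‖C.φ a - C.φ y‖) (𝓝[≠] x) Filter.atTop := by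
      refine Filter.tendsto_atTop_mono (f := fun y => ‖C.φ y‖ - ‖C.φ a‖) (fun y => ?_)
        (Filter.tendsto_atTop_add_const_right _ _ C.tendsto)
      rw [norm_sub_rev]
      exact norm_sub_norm_le _ _
    have h2 : Filter.Tendsto (fun y => (C.φ a - C.φ y)⁻¹) (𝓝[≠] x) (𝓝 0) :=
      Filter.tendsto_inv₀_cobounded.comp (tendsto_norm_atTop_iff_cobounded.1 h1)
    refine h2.congr' ?_
    filter_upwards [self_mem_nhdsWithin] with y hy
    rw [C.iota_ne a hy]
  · apply ContinuousAt.continuousWithinAt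
    have hev : C.iota a =ᶠ[𝓝 x] fun y => (C.φ a - C.φ y)⁻¹ := by
      filter_upwards [isOpen_compl_singleton.mem_nhds (show x ∈ ({q} : Set S)ᶜ from hxq)] with y hy
      exact C.iota_ne a hy
    refine ContinuousAt.congr ?_ hev.symm
    have hφx : ContinuousAt C.φ x :=
      C.hφ.continuousAt (isOpen_compl_singleton.mem_nhds hxq)
    refine ContinuousAt.inv₀ (continuousAt_const.sub hφx) ?_
    intro h
    exact hx (C.inj ha hxq (sub_eq_zero.1 h)).symm

/-- The variation of the complex logarithm of `(f t - x)` along an arc. -/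
lemma exists_theta (C : Chart S q) {f : ℝ → S} (hc : ContinuousOn f (Icc 0 1))
    (hq : q ∉ f '' Icc 0 1) : ∃ θ : S → ℂ, ContinuousOn θ (f '' Icc 0 1)ᶜ ∧ θ q = 0 ∧
      ∀ x, x ∉ f '' Icc 0 1 → x ≠ q →
        Complex.exp (θ x) = (C.φ (f 1) - C.φ x) / (C.φ (f 0) - C.φ x) := by
  classical
  set A := f '' Icc (0:ℝ) 1 with hA
  have h0A : f 0 ∈ A := ⟨0, by simp, rfl⟩
  have hneq : ∀ x ∈ A, x ≠ q := fun x hx e => hq (e ▸ hx)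
  have hfc : Continuous fun t : unitInterval => f t := continuousOn_iff_continuous_domRestrict.1 hc
  have hφf : Continuous fun t : unitInterval => C.φ (f t) :=
    C.hφ.comp_continuous hfc (fun t => hneq _ ⟨t, t.2, rfl⟩)
  have hι : Continuous fun x : ↥Aᶜ => C.iota (f 0) x :=
    (C.iota_cont (hneq _ h0A)).comp_continuous continuous_subtype_val
      (fun x e => x.2 (by rw [mem_singleton_iff.1 e]; exact h0A))
  have hform : ∀ (t : unitInterval) (x : S), x ∉ A → x ≠ q →
      1 + (C.φ (f t) - C.φ (f 0)) * C.iota (f 0) x =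
        (C.φ (f t) - C.φ x) / (C.φ (f 0) - C.φ x) := by
    intro t x hx hxq
    have : C.φ (f 0) - C.φ x ≠ 0 := fun h =>
      hx (by rw [← C.inj (hneq _ h0A) hxq (sub_eq_zero.1 h)]; exact h0A)
    rw [C.iota_ne _ hxq]
    field_simp
    ring
  have hne : ∀ (t : unitInterval) (x : S), x ∉ A →
      1 + (C.φ (f t) - C.φ (f 0)) * C.iota (f 0) x ≠ 0 := by
    intro t x hx
    by_cases hxq : x = q
    · subst hxq; rw [C.iota_q]; simp
    · rw [hform t x hx hxq]
      have htA : f t ∈ A := ⟨t, t.2, rfl⟩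
      refine div_ne_zero (fun h => ?_) (fun h => ?_)
      · exact hx (by rw [← C.inj (hneq _ htA) hxq (sub_eq_zero.1 h)]; exact htA)
      · exact hx (by rw [← C.inj (hneq _ h0A) hxq (sub_eq_zero.1 h)]; exact h0A)
  let H : C(unitInterval × ↥Aᶜ, {z : ℂ // z ≠ 0}) :=
    ⟨fun p => ⟨1 + (C.φ (f p.1) - C.φ (f 0)) * C.iota (f 0) p.2, hne p.1 p.2 p.2.2⟩, by
      refine Continuous.subtype_mk ?_ _
      exact continuous_const.add (((hφf.comp continuous_fst).sub continuous_const).mul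
        (hι.comp continuous_snd))⟩
  let z : C(↥Aᶜ, ℂ) := ContinuousMap.const _ 0
  have H0 : ∀ a, H (0, a) = (fun z : ℂ ↦ (⟨_, z.exp_ne_zero⟩ : {z : ℂ // z ≠ 0})) (z a) := by
    intro a
    apply Subtype.ext
    simp [H, z]
  let L := Complex.isCoveringMap_exp.liftHomotopy H z H0
  have hL : ∀ t a, Complex.exp (L (t, a)) =
      1 + (C.φ (f t) - C.φ (f 0)) * C.iota (f 0) (a : S) := by
    intro t a
    have := congrFun (Complex.isCoveringMap_exp.liftHomotopy_lifts H z H0) (t, a)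
    exact congrArg Subtype.val this
  have hL0 : ∀ a, L (0, a) = 0 := fun a => Complex.isCoveringMap_exp.liftHomotopy_zero H z H0 a
  refine ⟨fun x => if h : x ∈ Aᶜ then L (1, ⟨x, h⟩) else 0, ?_, ?_, ?_⟩
  · rw [continuousOn_iff_continuous_domRestrict]
    have : (Aᶜ.domRestrict fun x => if h : x ∈ Aᶜ then L (1, ⟨x, h⟩) else 0) =
        fun a : ↥Aᶜ => L (1, a) := by
      ext a
      have ha := a.2
      simp only [domRestrict_apply, ha, dif_pos]
    rw [this]
    exact L.continuous.comp (by fun_prop)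
  · have hqA : q ∈ Aᶜ := hq
    simp only [hqA, dif_pos]
    rw [← hL0 ⟨q, hqA⟩]
    refine exp_one_const (X := unitInterval) isPreconnected_univ
      (g := fun t => L (t, ⟨q, hqA⟩)) (Continuous.continuousOn (by fun_prop)) ?_
      (mem_univ _) (mem_univ _)
    intro t _
    rw [hL, C.iota_q]; simp
  · intro x hx hxq
    have hxA : x ∈ Aᶜ := hx
    simp only [hxA, dif_pos]
    rw [hL]
    exact hform 1 x hx hxq

end FC

end

section

namespace FC

/-- A drawing with a chart centred at a point off all the arcs, and angle functions. -/
structure Setup (n : ℕ) (S : Type*) [TopologicalSpace S] where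
  D : GoodDrawing n S
  q : S
  C : Chart S q
  hq : ∀ u v, u ≠ v → q ∉ D.arc u v
  θ : Fin n → Fin n → S → ℂ
  anti : ∀ u v x, θ v u x = - θ u v x
  cont : ∀ u v, u ≠ v → ContinuousOn (θ u v) (D.arc u v)ᶜ
  at_q : ∀ u v, θ u v q = 0
  exp_θ : ∀ u v, u ≠ v → ∀ x, x ∉ D.arc u v → x ≠ q →
    Complex.exp (θ u v x) = (C.φ (D.vtx v) - C.φ x) / (C.φ (D.vtx u) - C.φ x)

variable {S : Type*} [TopologicalSpace S] [CompactSpace S] [T2Space S] {n : ℕ}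

lemma exists_setup (D : GoodDrawing n S) (q : S) (C : Chart S q)
    (hq : ∀ u v, u ≠ v → q ∉ D.arc u v) :
    ∃ E : Setup n S, E.D = D ∧ E.q = q := by
  classical
  have key : ∀ u v : Fin n, ∃ θ : S → ℂ, u ≠ v → (ContinuousOn θ (D.arc u v)ᶜ ∧ θ q = 0 ∧
      ∀ x, x ∉ D.arc u v → x ≠ q →
        Complex.exp (θ x) = (C.φ (D.vtx v) - C.φ x) / (C.φ (D.vtx u) - C.φ x)) := by
    intro u v
    by_cases h : u = v
    · exact ⟨0, fun h' => absurd h h'⟩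
    · obtain ⟨f, hc, hi, h0, h1, ha⟩ := D.isArc u v h
      obtain ⟨θ, h2, h3, h4⟩ := exists_theta C hc (by rw [← ha]; exact hq u v h)
      refine ⟨θ, fun _ => ?_⟩
      rw [ha, ← h0, ← h1]
      exact ⟨h2, h3, h4⟩
  choose θ hθ using key
  let T : Fin n → Fin n → S → ℂ := fun u v x =>
    if u < v then θ u v x else if v < u then - θ v u x else 0
  have T1 : ∀ u v, u < v → T u v = θ u v := fun u v h => by ext x; simp [T, h]
  have T2 : ∀ u v, v < u → T u v = fun x => - θ v u x := fun u v h => by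
    ext x; simp [T, h, h.le, not_lt.2 h.le]
  refine ⟨⟨D, q, C, hq, T, ?_, ?_, ?_, ?_⟩, rfl, rfl⟩
  · intro u v x
    rcases lt_trichotomy u v with h | h | h
    · rw [T1 u v h, T2 v u h]
    · subst h; simp [T]
    · rw [T1 v u h, T2 u v h]; simp
  · intro u v huv
    rcases lt_or_gt_of_ne huv with h | h
    · rw [T1 u v h]; exact (hθ u v huv).1
    · rw [T2 u v h, D.arc_symm]; exact (hθ v u huv.symm).1.neg
  · intro u v
    rcases lt_trichotomy u v with h | h | h
    · rw [T1 u v h]; exact (hθ u v h.ne).2.1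
    · subst h; simp [T]
    · rw [T2 u v h]; simp [(hθ v u h.ne).2.1]
  · intro u v huv x hx hxq
    rcases lt_or_gt_of_ne huv with h | h
    · rw [T1 u v h]; exact (hθ u v huv).2.2 x hx hxq
    · rw [T2 u v h, Complex.exp_neg, (hθ v u huv.symm).2.2 x (by rwa [D.arc_symm]) hxq, inv_div]

lemma frontier_comp [LocallyConnectedSpace S] {U : Set S} (hU : IsOpen U) (x : S) :
    frontier (connectedComponentIn U x) ⊆ Uᶜ := by
  intro y hy hyU
  have ho : IsOpen (connectedComponentIn U x) := hU.connectedComponentIn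
  rw [ho.frontier_eq] at hy
  have hoy : IsOpen (connectedComponentIn U y) := hU.connectedComponentIn
  obtain ⟨z, hz1, hz2⟩ := mem_closure_iff.1 hy.1 _ hoy (mem_connectedComponentIn hyU)
  apply hy.2
  rw [connectedComponentIn_eq hz2, ← connectedComponentIn_eq hz1]
  exact mem_connectedComponentIn hyU

namespace Setup

variable (E : Setup n S)

/-- Winding number (times `2πi`) of the triangle `abc`. -/
def W (a b c : Fin n) (x : S) : ℂ := E.θ a b x + E.θ b c x + E.θ c a x

lemma W_rot (a b c : Fin n) (x : S) : E.W b c a x = E.W a b c x := by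
  simp only [W]; ring

lemma W_swap (a b c : Fin n) (x : S) : E.W b a c x = - E.W a b c x := by
  simp only [W]; rw [E.anti a b, E.anti c a, E.anti b c]; ring

lemma W_cocycle (a b c d : Fin n) (x : S) :
    E.W a b c x = E.W a b d x + E.W b c d x + E.W c a d x := by
  simp only [W]; rw [E.anti d a, E.anti d b, E.anti d c]; ring

lemma W_q (a b c : Fin n) : E.W a b c E.q = 0 := by simp [W, E.at_q]

lemma tri_rot (a b c : Fin n) : E.D.tri b c a = E.D.tri a b c := by
  simp only [GoodDrawing.tri, E.D.arc_symm b a, E.D.arc_symm c a]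
  ext x; simp only [mem_union]; tauto

lemma tri_swap (a b c : Fin n) : E.D.tri b a c = E.D.tri a b c := by
  simp only [GoodDrawing.tri, E.D.arc_symm b a]
  ext x; simp only [mem_union]; tauto

lemma not_mem_tri {a b c : Fin n} {x : S} (h : x ∉ E.D.tri a b c) :
    x ∉ E.D.arc a b ∧ x ∉ E.D.arc b c ∧ x ∉ E.D.arc c a := by
  rw [E.D.arc_symm c a]
  simp only [GoodDrawing.tri, mem_union] at h; tauto

lemma arc_isCompact {a b : Fin n} (h : a ≠ b) : IsCompact (E.D.arc a b) := by
  obtain ⟨f, hc, hi, h0, h1, ha⟩ := E.D.isArc a b h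
  rw [ha]; exact isCompact_Icc.image_of_continuousOn hc

lemma arc_closed {a b : Fin n} (h : a ≠ b) : IsClosed (E.D.arc a b) := (E.arc_isCompact h).isClosed

lemma arc_left {a b : Fin n} (h : a ≠ b) : E.D.vtx a ∈ E.D.arc a b := by
  obtain ⟨f, hc, hi, h0, h1, ha⟩ := E.D.isArc a b h
  rw [ha]; exact ⟨0, by simp, h0⟩

lemma arc_right {a b : Fin n} (h : a ≠ b) : E.D.vtx b ∈ E.D.arc a b := by
  rw [E.D.arc_symm]; exact E.arc_left h.symm

lemma arc_LT {a b : Fin n} (h : a ≠ b) : LT (E.D.arc a b) := by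
  obtain ⟨f, hc, hi, h0, h1, ha⟩ := E.D.isArc a b h
  rw [ha]; exact LT_arc zero_le_one hc hi

lemma vtx_ne_q {a b : Fin n} (h : a ≠ b) : E.D.vtx a ≠ E.q := fun e =>
  E.hq a b h (e ▸ E.arc_left h)

/-- Pairwise distinct triple. -/
def Ds (a b c : Fin n) : Prop := a ≠ b ∧ b ≠ c ∧ c ≠ a

variable {E} {a b c d : Fin n}

lemma _root_.FC.Setup.Ds.rot (h : Ds a b c) : Ds b c a := ⟨h.2.1, h.2.2, h.1⟩
lemma _root_.FC.Setup.Ds.swap (h : Ds a b c) : Ds b a c := ⟨h.1.symm, h.2.2.symm, h.2.1.symm⟩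

lemma tri_closed (h : Ds a b c) : IsClosed (E.D.tri a b c) :=
  ((E.arc_closed h.1).union (E.arc_closed h.2.1)).union (E.arc_closed h.2.2.symm)

lemma q_tri (h : Ds a b c) : E.q ∉ E.D.tri a b c := by
  simp only [GoodDrawing.tri, mem_union]
  have := E.hq _ _ h.1
  have := E.hq _ _ h.2.1
  have := E.hq _ _ h.2.2.symm
  tauto

lemma vtx_tri (h : Ds a b c) (hda : d ≠ a) (hdb : d ≠ b) (hdc : d ≠ c) :
    E.D.vtx d ∉ E.D.tri a b c := by
  simp only [GoodDrawing.tri, mem_union]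
  have := E.D.vtx_not_mem a b d h.1 hda hdb
  have := E.D.vtx_not_mem b c d h.2.1 hdb hdc
  have := E.D.vtx_not_mem a c d h.2.2.symm hda hdc
  tauto

lemma W_cont (h : Ds a b c) : ContinuousOn (E.W a b c) (E.D.tri a b c)ᶜ :=
  (((E.cont _ _ h.1).mono fun _ hx => (E.not_mem_tri hx).1).add
    ((E.cont _ _ h.2.1).mono fun _ hx => (E.not_mem_tri hx).2.1)).add
    ((E.cont _ _ h.2.2).mono fun _ hx => (E.not_mem_tri hx).2.2)

lemma phi_sub_ne {u v : Fin n} (h : u ≠ v) {x : S} (hx : x ∉ E.D.arc u v) (hxq : x ≠ E.q) :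
    E.C.φ (E.D.vtx u) - E.C.φ x ≠ 0 := by
  intro h0
  apply hx
  rw [← E.C.inj (E.vtx_ne_q h) hxq (sub_eq_zero.1 h0)]
  exact E.arc_left h

lemma W_exp (h : Ds a b c) {x : S} (hx : x ∉ E.D.tri a b c) : Complex.exp (E.W a b c x) = 1 := by
  by_cases hxq : x = E.q
  · rw [hxq, E.W_q, Complex.exp_zero]
  obtain ⟨h1, h2, h3⟩ := E.not_mem_tri hx
  rw [W, Complex.exp_add, Complex.exp_add, E.exp_θ _ _ h.1 x h1 hxq, E.exp_θ _ _ h.2.1 x h2 hxq,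
    E.exp_θ _ _ h.2.2 x h3 hxq]
  have := phi_sub_ne h.1 h1 hxq
  have := phi_sub_ne h.2.1 h2 hxq
  have := phi_sub_ne h.2.2 h3 hxq
  field_simp

lemma W_const (h : Ds a b c) {s : Set S} (hs : IsPreconnected s) (hd : s ⊆ (E.D.tri a b c)ᶜ)
    {x y : S} (hx : x ∈ s) (hy : y ∈ s) : E.W a b c x = E.W a b c y :=
  exp_one_const hs ((W_cont h).mono hd) (fun _ hz => W_exp h (hd hz)) hx hy

variable (E) in
/-- The bounded side. -/
def ins (a b c : Fin n) : Set S := {x | x ∉ E.D.tri a b c ∧ E.W a b c x ≠ 0}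

variable (E) in
/-- The side containing `q`. -/
def out (a b c : Fin n) : Set S := {x | x ∉ E.D.tri a b c ∧ E.W a b c x = 0}

lemma q_out (h : Ds a b c) : E.q ∈ E.out a b c := ⟨q_tri h, E.W_q _ _ _⟩

lemma ins_rot (a b c : Fin n) : E.ins b c a = E.ins a b c := by
  ext x; simp only [ins, Set.mem_ofPred_eq, E.tri_rot a b c, E.W_rot a b c]
lemma ins_swap (a b c : Fin n) : E.ins b a c = E.ins a b c := by
  ext x; simp only [ins, Set.mem_ofPred_eq, E.tri_swap a b c, E.W_swap a b c, ne_eq, neg_eq_zero]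
lemma out_rot (a b c : Fin n) : E.out b c a = E.out a b c := by
  ext x; simp only [out, Set.mem_ofPred_eq, E.tri_rot a b c, E.W_rot a b c]
lemma out_swap (a b c : Fin n) : E.out b a c = E.out a b c := by
  ext x; simp only [out, Set.mem_ofPred_eq, E.tri_swap a b c, E.W_swap a b c, neg_eq_zero]

lemma cover (x : S) : x ∈ E.D.tri a b c ∨ x ∈ E.ins a b c ∨ x ∈ E.out a b c := by
  simp only [ins, out, mem_ofPred_eq]; tauto

variable [LocallyConnectedSpace S]

lemma W_comp (h : Ds a b c) {x y : S} (hx : x ∉ E.D.tri a b c)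
    (hy : y ∈ connectedComponentIn (E.D.tri a b c)ᶜ x) : E.W a b c y = E.W a b c x :=
  W_const h isPreconnected_connectedComponentIn (connectedComponentIn_subset _ _) hy
    (mem_connectedComponentIn hx)

lemma comp_nhds (h : Ds a b c) {x : S} (hx : x ∉ E.D.tri a b c) :
    connectedComponentIn (E.D.tri a b c)ᶜ x ∈ 𝓝 x :=
  ((tri_closed h).isOpen_compl.connectedComponentIn).mem_nhds (mem_connectedComponentIn hx)

lemma ins_open (h : Ds a b c) : IsOpen (E.ins a b c) := by
  rw [isOpen_iff_mem_nhds]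
  intro x hx
  filter_upwards [comp_nhds h hx.1] with y hy
  exact ⟨connectedComponentIn_subset _ _ hy, by rw [W_comp h hx.1 hy]; exact hx.2⟩

lemma out_open (h : Ds a b c) : IsOpen (E.out a b c) := by
  rw [isOpen_iff_mem_nhds]
  intro x hx
  filter_upwards [comp_nhds h hx.1] with y hy
  exact ⟨connectedComponentIn_subset _ _ hy, by rw [W_comp h hx.1 hy]; exact hx.2⟩

lemma disj_io : Disjoint (E.ins a b c) (E.out a b c) :=
  disjoint_left.2 fun _ h1 h2 => h1.2 h2.2

lemma ins_frontier (h : Ds a b c) : frontier (E.ins a b c) ⊆ E.D.tri a b c := by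
  intro x hx
  rw [(ins_open h).frontier_eq] at hx
  rcases cover (E := E) (a := a) (b := b) (c := c) x with h1 | h1 | h1
  · exact h1
  · exact absurd h1 hx.2
  · exact absurd hx.1 (fun hh => disjoint_left.1 ((disj_io (E := E)).symm.closure_right (out_open h)) h1 hh)

lemma out_frontier (h : Ds a b c) : frontier (E.out a b c) ⊆ E.D.tri a b c := by
  intro x hx
  rw [(out_open h).frontier_eq] at hx
  rcases cover (E := E) (a := a) (b := b) (c := c) x with h1 | h1 | h1
  · exact h1
  · exact absurd hx.1 (fun hh => disjoint_left.1 ((disj_io (E := E)).closure_right (ins_open h)) h1 hh)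
  · exact absurd h1 hx.2

lemma two_arcs (h : Ds a b c) : E.D.arc b c ∩ E.D.arc c a = {E.D.vtx c} := by
  rw [E.D.arc_symm b c]; exact E.D.adj_arcs c b a h.2.1.symm h.2.2 h.1.symm

lemma three_arcs (h : Ds a b c) :
    E.D.arc a b ∩ (E.D.arc b c ∪ E.D.arc c a) = {E.D.vtx a, E.D.vtx b} := by
  rw [inter_union_distrib_left, two_arcs h.rot.rot, E.D.arc_symm c a, E.D.adj_arcs a b c h.1 h.2.2.symm h.2.1]
  ext x; simp only [mem_union, mem_singleton_iff, mem_insert_iff]; tauto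

lemma tri_eq (a b c : Fin n) :
    E.D.tri a b c = E.D.arc a b ∪ (E.D.arc b c ∪ E.D.arc c a) := by
  rw [GoodDrawing.tri, E.D.arc_symm c a, union_assoc]

lemma path_LT (h : Ds a b c) : LT (E.D.arc b c ∪ E.D.arc c a) :=
  LT_union (E.arc_closed h.2.1) (E.arc_closed h.2.2) (E.arc_LT h.2.1) (E.arc_LT h.2.2) (two_arcs h)

lemma one_comp_aux (h : Ds a b c) {p₁ p₂ : S} (h1 : p₁ ∉ E.D.tri a b c)
    (hq1 : E.q ∉ connectedComponentIn (E.D.tri a b c)ᶜ p₁)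
    (hne : p₂ ∉ connectedComponentIn (E.D.tri a b c)ᶜ p₁) (h2 : p₂ ∉ E.D.tri a b c)
    (hq2 : p₂ ≠ E.q) {m k : ℤ} {g : S → ℂ}
    (hg : ContinuousOn g (E.D.tri a b c))
    (he : ∀ x ∈ E.D.tri a b c, (E.C.φ x - E.C.φ p₁) ^ m * (E.C.φ x - E.C.φ p₂) ^ k =
      Complex.exp (g x)) : m = 0 := by
  set V := connectedComponentIn (E.D.tri a b c)ᶜ p₁ with hV
  have hneq : ∀ x ∈ V ∪ E.D.tri a b c, x ≠ E.q := by
    rintro x (hx | hx) e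
    · exact hq1 (e ▸ hx)
    · exact q_tri h (e ▸ hx)
  have hn2 : ∀ x ∈ V ∪ E.D.tri a b c, E.C.φ x - E.C.φ p₂ ≠ 0 := by
    intro x hx h0
    have := E.C.inj (hneq x hx) hq2 (sub_eq_zero.1 h0)
    rcases hx with hx | hx
    · exact hne (this ▸ hx)
    · exact h2 (this ▸ hx)
  refine eilenberg_sphere E.C (tri_closed h) (q_tri h)
    ((tri_closed h).isOpen_compl.connectedComponentIn) hq1 ?_ (mem_connectedComponentIn h1)
    (u := fun x => (E.C.φ x - E.C.φ p₂) ^ k) ?_ ?_ hg he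
  · have := frontier_comp (tri_closed (E := E) h).isOpen_compl p₁
    rwa [compl_compl] at this
  · refine ContinuousOn.zpow₀ ((E.C.hφ.mono hneq).sub continuousOn_const) k ?_
    intro x hx; exact Or.inl (hn2 x hx)
  · intro x hx; exact zpow_ne_zero _ (hn2 x hx)

lemma one_comp (h : Ds a b c) {p₁ p₂ : S} (h1 : p₁ ∉ E.D.tri a b c) (h2 : p₂ ∉ E.D.tri a b c)
    (hq1 : E.q ∉ connectedComponentIn (E.D.tri a b c)ᶜ p₁)
    (hq2 : E.q ∉ connectedComponentIn (E.D.tri a b c)ᶜ p₂) :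
    p₂ ∈ connectedComponentIn (E.D.tri a b c)ᶜ p₁ := by
  by_contra hne
  have hne' : p₁ ∉ connectedComponentIn (E.D.tri a b c)ᶜ p₂ := by
    intro h'
    apply hne
    rw [← connectedComponentIn_eq h']
    exact mem_connectedComponentIn h2
  have e1 : p₁ ≠ E.q := fun e => hq1 (e ▸ mem_connectedComponentIn h1)
  have e2 : p₂ ≠ E.q := fun e => hq2 (e ▸ mem_connectedComponentIn h2)
  have hneq : ∀ x ∈ E.D.tri a b c, x ≠ E.q := fun x hx e => q_tri h (e ▸ hx)
  have hc : ∀ p, ContinuousOn (fun x => E.C.φ x - E.C.φ p) (E.D.tri a b c) :=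
    fun p => (E.C.hφ.mono hneq).sub continuousOn_const
  have hn : ∀ p, p ≠ E.q → p ∉ E.D.tri a b c → ∀ x ∈ E.D.tri a b c, E.C.φ x - E.C.φ p ≠ 0 := by
    intro p hp hpt x hx h0
    exact hpt (E.C.inj (hneq x hx) hp (sub_eq_zero.1 h0) ▸ hx)
  have key := rank_one (E.arc_closed h.1) ((E.arc_closed h.2.1).union (E.arc_closed h.2.2))
    (E.arc_LT h.1) (path_LT h) (three_arcs h)
    (f₁ := fun x => E.C.φ x - E.C.φ p₁) (f₂ := fun x => E.C.φ x - E.C.φ p₂)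
  rw [← tri_eq] at key
  obtain ⟨m, k, hmk, g, hg, he⟩ := key (hc _) (hc _) (hn _ e1 h1) (hn _ e2 h2)
  have hm := one_comp_aux h h1 hq1 hne h2 e2 hg (fun x hx => he x hx)
  have hk := one_comp_aux h h2 hq2 hne' h1 e1 hg (m := k) (k := m)
    (fun x hx => by rw [mul_comm]; exact he x hx)
  tauto

end Setup
end FC

end

section

namespace FC
namespace Setup

variable {S : Type*} [TopologicalSpace S] [CompactSpace S] [T2Space S] {n : ℕ}
variable [LocallyConnectedSpace S]
variable {E : Setup n S} {a b c d : Fin n}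

lemma exp_two (h : Ds a b c) {x : S} (h2 : x ∉ E.D.arc b c) (h3 : x ∉ E.D.arc c a)
    (hxq : x ≠ E.q) : Complex.exp (E.θ b c x + E.θ c a x) =
      (E.C.φ (E.D.vtx a) - E.C.φ x) / (E.C.φ (E.D.vtx b) - E.C.φ x) := by
  rw [Complex.exp_add, E.exp_θ _ _ h.2.1 x h2 hxq, E.exp_θ _ _ h.2.2 x h3 hxq]
  have := phi_sub_ne h.2.1 h2 hxq
  have := phi_sub_ne h.2.2 h3 hxq
  field_simp

lemma interior_arc (h : Ds a b c) {x : S} (hx : x ∈ E.D.arc a b) (hxa : x ≠ E.D.vtx a)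
    (hxb : x ≠ E.D.vtx b) : x ∉ E.D.arc b c ∧ x ∉ E.D.arc c a := by
  have h3 := three_arcs (E := E) h
  have : x ∉ ({E.D.vtx a, E.D.vtx b} : Set S) := by simp [hxa, hxb]
  rw [← h3] at this
  simp only [mem_inter_iff, mem_union] at this
  tauto

open Classical in
lemma ins_nonempty (h : Ds a b c) : (E.ins a b c).Nonempty := by
  by_contra hne
  have hW : ∀ x, x ∉ E.D.tri a b c → E.W a b c x = 0 := by
    intro x hx
    by_contra h0
    exact hne ⟨x, hx, h0⟩
  have haq : E.D.vtx a ≠ E.q := E.vtx_ne_q h.1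
  have hbq : E.D.vtx b ≠ E.q := E.vtx_ne_q h.2.1
  set L : S → ℂ := fun x => if x ∈ E.D.arc a b then - (E.θ b c x + E.θ c a x) else E.θ a b x with hL
  have hLc : ContinuousOn L ({E.D.vtx a, E.D.vtx b} : Set S)ᶜ := by
    intro x hx
    simp only [mem_compl_iff, mem_insert_iff, mem_singleton_iff, not_or] at hx
    apply ContinuousAt.continuousWithinAt
    by_cases hxa : x ∈ E.D.arc a b
    · have hi := interior_arc h hxa hx.1 hx.2
      have ho : IsOpen (E.D.arc b c ∪ E.D.arc c a)ᶜ :=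
        ((E.arc_closed h.2.1).union (E.arc_closed h.2.2)).isOpen_compl
      have hxo : x ∈ (E.D.arc b c ∪ E.D.arc c a)ᶜ := by
        simp only [mem_compl_iff, mem_union]; tauto
      have hev : L =ᶠ[𝓝 x] fun y => - (E.θ b c y + E.θ c a y) := by
        filter_upwards [ho.mem_nhds hxo] with y hy
        simp only [hL]
        split_ifs with hya
        · rfl
        · have hyt : y ∉ E.D.tri a b c := by
            rw [tri_eq]; rintro (h1 | h1)
            · exact hya h1
            · exact hy h1
          have := hW y hyt
          simp only [W] at this
          linear_combination this
      refine ContinuousAt.congr ?_ hev.symm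
      exact (((E.cont _ _ h.2.1).continuousAt ((E.arc_closed h.2.1).isOpen_compl.mem_nhds hi.1)).add
        ((E.cont _ _ h.2.2).continuousAt ((E.arc_closed h.2.2).isOpen_compl.mem_nhds hi.2))).neg
    · have hev : L =ᶠ[𝓝 x] E.θ a b := by
        filter_upwards [(E.arc_closed h.1).isOpen_compl.mem_nhds hxa] with y hy
        have hy' : y ∉ E.D.arc a b := hy
        simp only [hL, hy', if_false]
      refine ContinuousAt.congr ?_ hev.symm
      exact (E.cont _ _ h.1).continuousAt ((E.arc_closed h.1).isOpen_compl.mem_nhds hxa)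
  have hLe : ∀ x, x ≠ E.D.vtx a → x ≠ E.D.vtx b → x ≠ E.q →
      Complex.exp (L x) = (E.C.φ (E.D.vtx b) - E.C.φ x) / (E.C.φ (E.D.vtx a) - E.C.φ x) := by
    intro x hxa hxb hxq
    simp only [hL]
    split_ifs with hx
    · have hi := interior_arc h hx hxa hxb
      rw [Complex.exp_neg, exp_two h hi.1 hi.2 hxq, inv_div]
    · exact E.exp_θ _ _ h.1 x hx hxq
  set A := E.C.φ (E.D.vtx a) with hA
  set B := E.C.φ (E.D.vtx b) with hB
  have hAB : B - A ≠ 0 := by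
    intro h0
    exact h.1.symm (E.D.vtx_inj (E.C.inj hbq haq (sub_eq_zero.1 h0)))
  have hAB' : A - B ≠ 0 := by rw [← neg_sub]; exact neg_ne_zero.2 hAB
  have hr : 0 < ‖B - A‖ / 2 := by positivity
  have hsp : ∀ z ∈ Metric.sphere A (‖B - A‖ / 2), z ≠ A ∧ z ≠ B ∧ (B - z) / (B - A) ∈ Complex.slitPlane := by
    intro z hz
    rw [mem_sphere_iff_norm] at hz
    refine ⟨?_, ?_, ?_⟩
    · rintro rfl; simp at hz; linarith
    · rintro rfl; linarith
    · have : (B - z) / (B - A) = 1 + (-(z - A) / (B - A)) := by field_simp; ring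
      rw [this]
      apply Complex.mem_slitPlane_of_norm_lt_one
      rw [norm_div, norm_neg, hz]
      field_simp; norm_num
  have hne1 : ∀ z, z ≠ A → E.C.ψ z ≠ E.D.vtx a := by
    intro z hz e; apply hz; rw [hA, ← e, E.C.right]
  have hne2 : ∀ z, z ≠ B → E.C.ψ z ≠ E.D.vtx b := by
    intro z hz e; apply hz; rw [hB, ← e, E.C.right]
  have := no_log_circle (A := A) hr (m := 1)
    (l := fun z => - L (E.C.ψ z) + Complex.log ((B - z) / (B - A)) + Complex.log (A - B)) (by
      refine ((ContinuousOn.neg ?_).add ?_).add continuousOn_const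
      · refine hLc.comp E.C.hψ.continuousOn ?_
        intro z hz
        have := hsp z hz
        simp [hne1 z this.1, hne2 z this.2.1]
      · refine ContinuousOn.clog ?_ (fun z hz => (hsp z hz).2.2)
        exact (continuousOn_const.sub continuousOn_id).div_const _) (by
      intro z hz
      obtain ⟨h1, h2, h3⟩ := hsp z hz
      rw [Complex.exp_add, Complex.exp_add, Complex.exp_neg, hLe _ (hne1 z h1) (hne2 z h2) (E.C.ne z),
        E.C.right, Complex.exp_log hAB', Complex.exp_log (Complex.slitPlane_ne_zero h3)]
      have : A - z ≠ 0 := sub_ne_zero.2 h1.symm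
      have : B - z ≠ 0 := sub_ne_zero.2 h2.symm
      field_simp
      ring)
  exact one_ne_zero this

lemma q_not_comp_ins (h : Ds a b c) {x : S} (hx : x ∈ E.ins a b c) :
    E.q ∉ connectedComponentIn (E.D.tri a b c)ᶜ x := by
  intro hq
  exact hx.2 ((W_comp h hx.1 hq).symm.trans (E.W_q a b c))

lemma ins_eq (h : Ds a b c) {x : S} (hx : x ∈ E.ins a b c) :
    E.ins a b c = connectedComponentIn (E.D.tri a b c)ᶜ x := by
  ext y
  constructor
  · intro hy
    exact one_comp h hx.1 hy.1 (q_not_comp_ins h hx) (q_not_comp_ins h hy)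
  · intro hy
    exact ⟨connectedComponentIn_subset _ _ hy, by rw [W_comp h hx.1 hy]; exact hx.2⟩

lemma out_eq (h : Ds a b c) : E.out a b c = connectedComponentIn (E.D.tri a b c)ᶜ E.q := by
  ext y
  constructor
  · intro hy
    by_contra hne
    obtain ⟨p, hp⟩ := ins_nonempty (E := E) h
    have : y ∈ connectedComponentIn (E.D.tri a b c)ᶜ p := by
      refine one_comp h hp.1 hy.1 (q_not_comp_ins h hp) ?_
      intro hq
      apply hne
      rw [← connectedComponentIn_eq hq]
      exact mem_connectedComponentIn hy.1
    rw [← ins_eq h hp] at this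
    exact this.2 hy.2
  · intro hy
    exact ⟨connectedComponentIn_subset _ _ hy, by rw [W_comp h (q_tri h) hy]; exact E.W_q a b c⟩

lemma out_preconn (h : Ds a b c) : IsPreconnected (E.out a b c) := by
  rw [out_eq h]; exact isPreconnected_connectedComponentIn

lemma W_ins (h : Ds a b c) {x y : S} (hx : x ∈ E.ins a b c) (hy : y ∈ E.ins a b c) :
    E.W a b c x = E.W a b c y := by
  rw [ins_eq h hx] at hy
  exact (W_comp h hx.1 hy).symm

/-- Closing off part of an arc: what remains does not separate. -/
lemma interior_closure (h : Ds a b c) {f : ℝ → S} (hc : ContinuousOn f (Icc 0 1))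
    (hi : InjOn f (Icc 0 1)) (h0 : f 0 = E.D.vtx a) (h1 : f 1 = E.D.vtx b)
    (hf : E.D.arc a b = f '' Icc 0 1) {t : ℝ} (ht : t ∈ Ioo (0:ℝ) 1) {U N : Set S}
    (hU : U = E.ins a b c ∨ U = E.out a b c) (hN : IsOpen N) (hp : f t ∈ N) :
    (N ∩ U).Nonempty := by
  by_contra hNU
  have hdis : Disjoint U N := by
    rw [disjoint_iff_inter_eq_empty, inter_comm]; exact not_nonempty_iff_eq_empty.1 hNU
  have hclos : Disjoint (closure U) N := hdis.closure_left hN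
  have hat : ContinuousAt f t := hc.continuousAt (Icc_mem_nhds ht.1 ht.2)
  have hnear : ∀ᶠ s in 𝓝 t, f s ∈ N := hat.eventually (hN.mem_nhds hp)
  obtain ⟨ε, hε, hball⟩ := Metric.eventually_nhds_iff.1 hnear
  set δ := min (ε / 2) (min (t / 2) ((1 - t) / 2)) with hδ
  have hδ0 : 0 < δ := by
    have := ht.1; have := ht.2
    simp only [hδ, lt_min_iff]; refine ⟨by linarith, by linarith, by linarith⟩
  have hδ1 : δ ≤ ε / 2 := min_le_left _ _
  have hδ2 : δ ≤ t / 2 := (min_le_right _ _).trans (min_le_left _ _)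
  have hδ3 : δ ≤ (1 - t) / 2 := (min_le_right _ _).trans (min_le_right _ _)
  have hin : ∀ s, t - δ ≤ s → s ≤ t + δ → f s ∈ N := by
    intro s hs1 hs2
    apply hball
    rw [Real.dist_eq, abs_lt]; constructor <;> linarith
  have ht0 := ht.1
  have ht1 := ht.2
  have s1 : Icc 0 (t - δ) ⊆ Icc (0:ℝ) 1 := Icc_subset_Icc le_rfl (by linarith)
  have s2 : Icc (t + δ) 1 ⊆ Icc (0:ℝ) 1 := Icc_subset_Icc (by linarith) le_rfl
  set K₁ := f '' Icc 0 (t - δ) with hK1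
  set K₂ := f '' Icc (t + δ) 1 with hK2
  have hK1c : IsClosed K₁ := (isCompact_Icc.image_of_continuousOn (hc.mono s1)).isClosed
  have hK2c : IsClosed K₂ := (isCompact_Icc.image_of_continuousOn (hc.mono s2)).isClosed
  have hK1s : K₁ ⊆ E.D.arc a b := by rw [hf]; exact image_mono s1
  have hK2s : K₂ ⊆ E.D.arc a b := by rw [hf]; exact image_mono s2
  have hKK : Disjoint K₁ K₂ := by
    rw [disjoint_left]
    rintro _ ⟨s, hs, rfl⟩ ⟨s', hs', he⟩
    have := hi (s2 hs') (s1 hs) he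
    have := hs.2; have := hs'.1
    linarith
  have haK1 : E.D.vtx a ∈ K₁ := ⟨0, ⟨le_rfl, by linarith⟩, h0⟩
  have hbK2 : E.D.vtx b ∈ K₂ := ⟨1, ⟨by linarith, le_rfl⟩, h1⟩
  have h3 := three_arcs (E := E) h
  have haP : E.D.vtx a ∈ E.D.arc b c ∪ E.D.arc c a := Or.inr (E.arc_right h.2.2)
  have hbP : E.D.vtx b ∈ E.D.arc b c ∪ E.D.arc c a := Or.inl (E.arc_left h.2.1)
  have i1 : (E.D.arc b c ∪ E.D.arc c a) ∩ K₁ = {E.D.vtx a} := by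
    apply Subset.antisymm
    · rintro x ⟨hx1, hx2⟩
      have : x ∈ ({E.D.vtx a, E.D.vtx b} : Set S) := by rw [← h3]; exact ⟨hK1s hx2, hx1⟩
      rcases this with rfl | hxb
      · rfl
      · rw [mem_singleton_iff.1 hxb] at hx2; exact absurd hbK2 (disjoint_left.1 hKK hx2)
    · rintro _ rfl; exact ⟨haP, haK1⟩
  have i2 : ((E.D.arc b c ∪ E.D.arc c a) ∪ K₁) ∩ K₂ = {E.D.vtx b} := by
    apply Subset.antisymm
    · rintro x ⟨hx1, hx2⟩
      rcases hx1 with hx1 | hx1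
      · have : x ∈ ({E.D.vtx a, E.D.vtx b} : Set S) := by rw [← h3]; exact ⟨hK2s hx2, hx1⟩
        rcases this with rfl | hxb
        · exact absurd hx2 (disjoint_left.1 hKK haK1)
        · exact hxb
      · exact absurd hx2 (disjoint_left.1 hKK hx1)
    · rintro _ rfl; exact ⟨Or.inl hbP, hbK2⟩
  have hPc : IsClosed (E.D.arc b c ∪ E.D.arc c a) := (E.arc_closed h.2.1).union (E.arc_closed h.2.2)
  set K := ((E.D.arc b c ∪ E.D.arc c a) ∪ K₁) ∪ K₂ with hK
  have hKc : IsClosed K := (hPc.union hK1c).union hK2c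
  have hLT : LT K := by
    refine LT_union (hPc.union hK1c) hK2c (LT_union hPc hK1c (path_LT h) ?_ i1) ?_ i2
    · exact LT_arc (by linarith) (hc.mono s1) (hi.mono s1)
    · exact LT_arc (by linarith) (hc.mono s2) (hi.mono s2)
  have hKt : K ⊆ E.D.tri a b c := by
    rw [tri_eq]
    rintro x ((hx | hx) | hx)
    · exact Or.inr hx
    · exact Or.inl (hK1s hx)
    · exact Or.inl (hK2s hx)
  have hqK : E.q ∉ K := fun hx => q_tri h (hKt hx)
  have hUf : frontier U ⊆ E.D.tri a b c := by
    rcases hU with rfl | rfl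
    · exact ins_frontier h
    · exact out_frontier h
  have hUK : frontier U ⊆ K := by
    intro x hx
    have hxN : x ∉ N := disjoint_left.1 hclos (frontier_subset_closure hx)
    have hxt := hUf hx
    rw [tri_eq] at hxt
    rcases hxt with hxt | hxt
    · rw [hf] at hxt
      obtain ⟨s, hs, rfl⟩ := hxt
      by_cases hs1 : s ≤ t - δ
      · exact Or.inl (Or.inr ⟨s, ⟨hs.1, hs1⟩, rfl⟩)
      by_cases hs2 : t + δ ≤ s
      · exact Or.inr ⟨s, ⟨hs2, hs.2⟩, rfl⟩
      exact absurd (hin s (by linarith) (by linarith)) hxN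
    · exact Or.inl (Or.inl hxt)
  rcases hU with rfl | rfl
  · have := LT_no_sep E.C hKc hqK hLT (ins_open h) (fun hx => hx.2 (E.W_q a b c)) hUK
      (disjoint_left.2 fun x hx hxK => hx.1 (hKt hxK))
    exact (ins_nonempty h).ne_empty this
  · have hcl : IsClosed (E.out a b c ∪ K) := by
      have : E.out a b c ∪ K = closure (E.out a b c) ∪ K := by
        rw [closure_eq_self_union_frontier, union_assoc, union_eq_self_of_subset_left hUK]
      rw [this]; exact isClosed_closure.union hKc
    have hV := LT_no_sep E.C hKc hqK hLT (V := (E.out a b c ∪ K)ᶜ) hcl.isOpen_compl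
      (fun hx => hx (Or.inl (q_out h))) (by
        rw [frontier_compl]
        refine (frontier_union_subset _ _).trans ?_
        rintro x (hx | hx)
        · exact hUK hx.1
        · exact hKc.frontier_subset hx.2) (disjoint_left.2 fun x hx hxK => hx (Or.inr hxK))
    obtain ⟨y, hy⟩ := ins_nonempty (E := E) h
    have : y ∈ (E.out a b c ∪ K)ᶜ := by
      rintro (hx | hx)
      · exact hy.2 hx.2
      · exact hy.1 (hKt hx)
    rw [hV] at this
    exact this

lemma arc_closure (h : Ds a b c) {U : Set S}
    (hU : U = E.ins a b c ∨ U = E.out a b c) : E.D.arc a b ⊆ closure U := by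
  obtain ⟨f, hc, hi, h0, h1, ha⟩ := E.D.isArc a b h.1
  have h01 : closure (Ioo (0:ℝ) 1) = Icc 0 1 := closure_Ioo zero_ne_one
  rw [ha, ← h01]
  refine (ContinuousOn.image_closure (by rw [h01]; exact hc)).trans ?_
  refine closure_minimal ?_ isClosed_closure
  rintro _ ⟨t, ht, rfl⟩
  rw [mem_closure_iff]
  intro N hN hp
  exact interior_closure h hc hi h0 h1 ha ht hU hN hp

lemma compl_arc_dense (h : Ds a b c) : Dense (E.D.arc a b)ᶜ := by
  intro x
  by_cases hx : x ∈ E.D.arc a b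
  · refine closure_mono ?_ (arc_closure h (Or.inl rfl) hx)
    intro y hy; exact (E.not_mem_tri hy.1).1
  · exact subset_closure hx

variable (E) in
/-- Convexity of bounded sides. -/
def Conv : Prop := ∀ a b c, Ds a b c → E.D.ConvexDisc (E.ins a b c ∪ E.D.tri a b c)

lemma mid_arc (h : a ≠ b) : ∃ p ∈ E.D.arc a b, p ≠ E.D.vtx a ∧ p ≠ E.D.vtx b := by
  obtain ⟨f, hc, hi, h0, h1, ha⟩ := E.D.isArc a b h
  refine ⟨f (1/2), by rw [ha]; exact ⟨1/2, by norm_num, rfl⟩, ?_, ?_⟩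
  · rw [← h0]; intro e; have := hi (by norm_num) (by norm_num) e; norm_num at this
  · rw [← h1]; intro e; have := hi (by norm_num) (by norm_num) e; norm_num at this

lemma ne_of_ins (h : Ds a b c) (hd : E.D.vtx d ∈ E.ins a b c) : d ≠ a ∧ d ≠ b ∧ d ≠ c := by
  have ht := E.not_mem_tri hd.1
  refine ⟨?_, ?_, ?_⟩ <;> rintro rfl
  · exact ht.1 (E.arc_left h.1)
  · exact ht.1 (E.arc_right h.1)
  · exact ht.2.1 (E.arc_right h.2.1)

/-- If `d` is inside `abc` then `abd` and `abc` have the same orientation. -/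
lemma orient_eq (hE : E.Conv) (h : Ds a b c) (hd : E.D.vtx d ∈ E.ins a b c) :
    ∃ z, z ∈ E.ins a b c ∧ z ∈ E.ins a b d ∧ E.W a b c z = E.W a b d z := by
  obtain ⟨hda, hdb, hdc⟩ := ne_of_ins h hd
  have h' : Ds a b d := ⟨h.1, hdb.symm, hda⟩
  have hsub : E.D.tri a b d ⊆ E.ins a b c ∪ E.D.tri a b c := by
    have ha : E.D.vtx a ∈ E.ins a b c ∪ E.D.tri a b c := by
      rw [tri_eq]; exact Or.inr (Or.inl (E.arc_left h.1))
    have hb : E.D.vtx b ∈ E.ins a b c ∪ E.D.tri a b c := by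
      rw [tri_eq]; exact Or.inr (Or.inl (E.arc_right h.1))
    rw [tri_eq a b d]
    rintro x (hx | hx | hx)
    · rw [tri_eq]; exact Or.inr (Or.inl hx)
    · exact hE a b c h b d hdb.symm hb (Or.inl hd) hx
    · exact hE a b c h d a hda (Or.inl hd) ha hx
  have hout : E.out a b c ⊆ (E.D.tri a b d)ᶜ := by
    intro x hx hxt
    rcases hsub hxt with h1 | h1
    · exact h1.2 hx.2
    · exact hx.1 h1
  have hW0 : ∀ x ∈ E.out a b c, E.W a b d x = 0 := fun x hx =>
    (W_const h' (out_preconn h) hout hx (q_out h)).trans (E.W_q a b d)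
  obtain ⟨p, hp, hpa, hpb⟩ := mid_arc (E := E) h.1
  set O := ((E.D.arc b c ∪ E.D.arc c a) ∪ (E.D.arc b d ∪ E.D.arc d a))ᶜ with hO
  have hOo : IsOpen O := (((E.arc_closed h.2.1).union (E.arc_closed h.2.2)).union
    ((E.arc_closed h'.2.1).union (E.arc_closed h'.2.2))).isOpen_compl
  have hpO : p ∈ O := by
    have := interior_arc h hp hpa hpb
    have := interior_arc h' hp hpa hpb
    simp only [hO, mem_compl_iff, mem_union]; tauto
  set N := connectedComponentIn O p with hN
  have hNo : IsOpen N := hOo.connectedComponentIn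
  have hpN : p ∈ N := mem_connectedComponentIn hpO
  have hNs : ∀ x ∈ N, x ∉ E.D.arc b c ∧ x ∉ E.D.arc c a ∧ x ∉ E.D.arc b d ∧ x ∉ E.D.arc d a := by
    intro x hx
    have : x ∈ O := connectedComponentIn_subset _ _ hx
    simp only [hO, mem_compl_iff, mem_union] at this; tauto
  have hG : ∀ x ∈ N, ∀ y ∈ N, E.W a b c x - E.W a b d x = E.W a b c y - E.W a b d y := by
    intro x hx y hy
    have := exp_one_const (s := N) isPreconnected_connectedComponentIn
      (g := fun x => (E.θ b c x + E.θ c a x) - (E.θ b d x + E.θ d a x)) (by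
        refine ContinuousOn.sub (ContinuousOn.add ?_ ?_) (ContinuousOn.add ?_ ?_)
        · exact (E.cont _ _ h.2.1).mono fun x hx => (hNs x hx).1
        · exact (E.cont _ _ h.2.2).mono fun x hx => (hNs x hx).2.1
        · exact (E.cont _ _ h'.2.1).mono fun x hx => (hNs x hx).2.2.1
        · exact (E.cont _ _ h'.2.2).mono fun x hx => (hNs x hx).2.2.2) (by
        intro x hx
        obtain ⟨g1, g2, g3, g4⟩ := hNs x hx
        by_cases hxq : x = E.q
        · rw [hxq]; simp [E.at_q]
        · rw [Complex.exp_sub, exp_two h g1 g2 hxq, exp_two h' g3 g4 hxq]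
          apply div_self
          refine div_ne_zero ?_ (phi_sub_ne h.2.1 g1 hxq)
          exact phi_sub_ne h.2.2.symm (by rwa [E.D.arc_symm]) hxq) hx hy
    simp only [W]
    linear_combination this
  obtain ⟨z, hzN, hz⟩ := mem_closure_iff.1 (arc_closure h (Or.inr rfl) hp) N hNo hpN
  obtain ⟨z', hzN', hz'⟩ := mem_closure_iff.1 (arc_closure h' (Or.inl rfl) hp) N hNo hpN
  have e := hG z' hzN' z hzN
  rw [hz.2, hW0 z hz, sub_zero, sub_eq_zero] at e
  refine ⟨z', ⟨?_, ?_⟩, hz', e⟩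
  · rw [tri_eq]
    rintro (h1 | h1 | h1)
    · exact (E.not_mem_tri hz'.1).1 h1
    · exact (hNs z' hzN').1 h1
    · exact (hNs z' hzN').2.1 h1
  · rw [e]; exact hz'.2

end Setup
end FC

end

section

namespace FC

open Setup (Ds)

/-- `d` is inside the triangle `abc` with respect to the orientation predicate `P`. -/
def In {n : ℕ} (P : Fin n → Fin n → Fin n → Prop) (a b c d : Fin n) : Prop :=
  (P a b d ∧ P b c d ∧ P c a d) ∨ (¬ P a b d ∧ ¬ P b c d ∧ ¬ P c a d)

/-- Abstract orientation systems. -/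
structure Sys (n : ℕ) where
  P : Fin n → Fin n → Fin n → Prop
  rot : ∀ a b c, Ds a b c → (P b c a ↔ P a b c)
  swap : ∀ a b c, Ds a b c → (P b a c ↔ ¬ P a b c)
  imp : ∀ a b c d, Ds a b c → d ≠ a → d ≠ b → d ≠ c → In P a b c d → (P a b c ↔ P a b d)
  coc : ∀ a b c d x, Ds a b c → d ≠ a → d ≠ b → d ≠ c → x ≠ a → x ≠ b → x ≠ c → x ≠ d →
    In P a b c x → In P a b d x ∨ In P b c d x ∨ In P c a d x

namespace Setup

variable {S : Type*} [TopologicalSpace S] [CompactSpace S] [T2Space S] {n : ℕ}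
variable [LocallyConnectedSpace S]
variable {E : Setup n S} {a b c d : Fin n}

lemma W_im (h : Ds a b c) {x : S} (hx : x ∈ E.ins a b c) : (E.W a b c x).im ≠ 0 := by
  obtain ⟨m, hm⟩ := Complex.exp_eq_one_iff.1 (W_exp h hx.1)
  intro h0
  apply hx.2
  rw [hm] at h0 ⊢
  simp at h0
  simp [h0]

variable (E) in
/-- Positive orientation. -/
def Pos (a b c : Fin n) : Prop := ∃ z ∈ E.ins a b c, 0 < (E.W a b c z).im

lemma Pos_iff (h : Ds a b c) {z : S} (hz : z ∈ E.ins a b c) :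
    E.Pos a b c ↔ 0 < (E.W a b c z).im := by
  constructor
  · rintro ⟨y, hy, h1⟩
    rwa [W_ins h hz hy]
  · exact fun h1 => ⟨z, hz, h1⟩

lemma Pos_rot (h : Ds a b c) : E.Pos b c a ↔ E.Pos a b c := by
  obtain ⟨z, hz⟩ := ins_nonempty (E := E) h
  rw [Pos_iff h hz, Pos_iff h.rot (by rwa [ins_rot]), E.W_rot]

lemma Pos_swap (h : Ds a b c) : E.Pos b a c ↔ ¬ E.Pos a b c := by
  obtain ⟨z, hz⟩ := ins_nonempty (E := E) h
  have := W_im h hz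
  rw [Pos_iff h hz, Pos_iff h.swap (by rwa [ins_swap]), E.W_swap, Complex.neg_im]
  constructor
  · intro h1; linarith
  · intro h1
    have := lt_of_le_of_ne (not_lt.1 h1) this
    linarith

lemma Pos_orient (hE : E.Conv) (h : Ds a b c) (hd : E.D.vtx d ∈ E.ins a b c) :
    E.Pos a b c ↔ E.Pos a b d := by
  obtain ⟨hda, hdb, hdc⟩ := ne_of_ins h hd
  have h' : Ds a b d := ⟨h.1, hdb.symm, hda⟩
  obtain ⟨z, h1, h2, h3⟩ := orient_eq hE h hd
  rw [Pos_iff h h1, Pos_iff h' h2, h3]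

lemma W_im_zero_or (h : Ds a b c) {z : S} (hz : z ∉ E.D.tri a b c) (hp : E.Pos a b c) :
    0 ≤ (E.W a b c z).im := by
  by_cases h0 : E.W a b c z = 0
  · rw [h0]; simp
  · exact ((Pos_iff h ⟨hz, h0⟩).1 hp).le

lemma W_im_zero_or' (h : Ds a b c) {z : S} (hz : z ∉ E.D.tri a b c) (hp : ¬ E.Pos a b c) :
    (E.W a b c z).im ≤ 0 := by
  by_cases h0 : E.W a b c z = 0
  · rw [h0]; simp
  · exact not_lt.1 fun h1 => hp ((Pos_iff h ⟨hz, h0⟩).2 h1)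

lemma In_of_ins (hE : E.Conv) (h : Ds a b c) (hd : E.D.vtx d ∈ E.ins a b c) :
    In E.Pos a b c d := by
  have h1 := Pos_orient hE h hd
  have h2 := Pos_orient hE h.rot (by rwa [ins_rot])
  have h3 := Pos_orient hE h.rot.rot (by rwa [ins_rot, ins_rot])
  rw [Pos_rot h] at h2
  rw [Pos_rot h.rot, Pos_rot h] at h3
  unfold In
  rw [← h1, ← h2, ← h3]
  tauto

lemma ins_of_In (h : Ds a b c) (hda : d ≠ a) (hdb : d ≠ b) (hdc : d ≠ c)
    (hd : In E.Pos a b c d) : E.D.vtx d ∈ E.ins a b c := by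
  have hab : Ds a b d := ⟨h.1, hdb.symm, hda⟩
  have hbc : Ds b c d := ⟨h.2.1, hdc.symm, hdb⟩
  have hca : Ds c a d := ⟨h.2.2, hda.symm, hdc⟩
  by_contra hcon
  have hout : E.D.vtx d ∈ E.out a b c := by
    rcases cover (E := E) (a := a) (b := b) (c := c) (E.D.vtx d) with h1 | h1 | h1
    · exact absurd h1 (vtx_tri h hda hdb hdc)
    · exact absurd h1 hcon
    · exact h1
  have hcl : E.D.vtx d ∈ closure (E.ins a b d) := by
    have := arc_closure (E := E) hab.rot (Or.inl rfl) (E.arc_right hab.2.1)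
    rwa [ins_rot] at this
  have hop : IsOpen (E.out a b c ∩ E.ins a b d) := (out_open h).inter (ins_open hab)
  obtain ⟨z, hz⟩ := mem_closure_iff.1 hcl _ (out_open h) hout
  have hcd : Ds c d a := ⟨hdc.symm, hda, h.2.2.symm⟩
  obtain ⟨y, ⟨hy1, hy2⟩, hy3⟩ := (compl_arc_dense (E := E) hcd).inter_open_nonempty _ hop ⟨z, hz⟩
  obtain ⟨-, g1, g2⟩ := E.not_mem_tri hy1.1
  obtain ⟨-, g3, g4⟩ := E.not_mem_tri hy2.1
  have t1 : y ∉ E.D.tri b c d := by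
    rw [tri_eq, E.D.arc_symm d b]; rintro (h1 | h1 | h1)
    · exact g1 h1
    · exact hy3 h1
    · exact g3 h1
  have t2 : y ∉ E.D.tri c a d := by
    rw [tri_eq, E.D.arc_symm d c, E.D.arc_symm a d]; rintro (h1 | h1 | h1)
    · exact g2 h1
    · exact g4 h1
    · exact hy3 h1
  have hco := congrArg Complex.im (E.W_cocycle a b c d y)
  rw [hy1.2] at hco
  simp only [Complex.zero_im, Complex.add_im] at hco
  have hne := W_im hab hy2
  rcases hd with ⟨p1, p2, p3⟩ | ⟨p1, p2, p3⟩
  · have := W_im_zero_or hab hy2.1 p1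
    have := W_im_zero_or hbc t1 p2
    have := W_im_zero_or hca t2 p3
    exact hne (by linarith)
  · have := W_im_zero_or' hab hy2.1 p1
    have := W_im_zero_or' hbc t1 p2
    have := W_im_zero_or' hca t2 p3
    exact hne (by linarith)

variable (E) in
/-- The orientation system of a convex set-up. -/
def toSys (hE : E.Conv) : Sys n where
  P := E.Pos
  rot := fun _ _ _ h => Pos_rot h
  swap := fun _ _ _ h => Pos_swap h
  imp := fun _ _ _ _ h h1 h2 h3 hi => Pos_orient hE h (ins_of_In h h1 h2 h3 hi)
  coc := by
    intro a b c d x h hda hdb hdc hxa hxb hxc hxd hi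
    have hx := ins_of_In h hxa hxb hxc hi
    have hab : Ds a b d := ⟨h.1, hdb.symm, hda⟩
    have hbc : Ds b c d := ⟨h.2.1, hdc.symm, hdb⟩
    have hca : Ds c a d := ⟨h.2.2, hda.symm, hdc⟩
    by_contra hcon
    simp only [not_or] at hcon
    have e : ∀ {u v w : Fin n}, Ds u v w → x ≠ u → x ≠ v → x ≠ w → ¬ In E.Pos u v w x →
        E.W u v w (E.D.vtx x) = 0 := by
      intro u v w hu h1 h2 h3 h4
      by_contra h0
      exact h4 (In_of_ins hE hu ⟨vtx_tri hu h1 h2 h3, h0⟩)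
    apply hx.2
    rw [E.W_cocycle a b c d, e hab hxa hxb hxd hcon.1, e hbc hxb hxc hxd hcon.2.1,
      e hca hxc hxa hxd hcon.2.2]
    simp

end Setup

/-- Empty triangles of an orientation system. -/
def Sys.empt {n : ℕ} (Y : Sys n) : Set (Finset (Fin n)) :=
  {T | ∃ a b c, Ds a b c ∧ T = {a, b, c} ∧ ∀ d, d ≠ a → d ≠ b → d ≠ c → ¬ In Y.P a b c d}

namespace Setup

variable {S : Type*} [TopologicalSpace S] [CompactSpace S] [T2Space S] {n : ℕ}
variable [LocallyConnectedSpace S]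
variable {E : Setup n S} {a b c d : Fin n}

lemma open_side (h : Ds a b c) {U : Set S} (hU : IsOpenSide (E.D.tri a b c) U) :
    U = E.ins a b c ∨ U = E.out a b c := by
  obtain ⟨p, hp, rfl⟩ := hU
  rcases cover (E := E) (a := a) (b := b) (c := c) p with h1 | h1 | h1
  · exact absurd h1 hp
  · exact Or.inl (ins_eq h h1).symm
  · right
    rw [out_eq h] at h1
    rw [out_eq h, connectedComponentIn_eq h1]

lemma ins_side (h : Ds a b c) : IsOpenSide (E.D.tri a b c) (E.ins a b c) := by
  obtain ⟨z, hz⟩ := ins_nonempty (E := E) h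
  exact ⟨z, hz.1, ins_eq h hz⟩

variable (E) in
lemma emptyTriangles_finite : E.D.emptyTriangles.Finite := by
  have : E.D.emptyTriangles ⊆ Set.range (fun t : (Fin n × Fin n × Fin n) × Bool =>
      (({t.1.1, t.1.2.1, t.1.2.2} : Finset (Fin n)),
        if t.2 then E.ins t.1.1 t.1.2.1 t.1.2.2 else E.out t.1.1 t.1.2.1 t.1.2.2)) := by
    rintro ⟨T, U⟩ ⟨a, b, c, hab, hac, hbc, hT, hU, -⟩
    rcases open_side (E := E) ⟨hab, hbc, hac.symm⟩ hU with h1 | h1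
    · exact ⟨((a, b, c), true), by simp at hT h1; simp [hT, h1]⟩
    · exact ⟨((a, b, c), false), by simp at hT h1; simp [hT, h1]⟩
  exact (Set.finite_range _).subset this

lemma empt_le (hE : E.Conv) : (E.toSys hE).empt.ncard ≤ E.D.emptyTriangles.ncard := by
  have hsub : (E.toSys hE).empt ⊆ Prod.fst '' E.D.emptyTriangles := by
    rintro T ⟨a, b, c, h, rfl, hno⟩
    refine ⟨({a, b, c}, E.ins a b c), ⟨a, b, c, h.1, h.2.2.symm, h.2.1, rfl, ins_side h, ?_⟩, rfl⟩
    intro d hd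
    obtain ⟨h1, h2, h3⟩ := ne_of_ins h hd
    exact hno d h1 h2 h3 (In_of_ins hE h hd)
  exact (Set.ncard_le_ncard hsub (E.emptyTriangles_finite.image _)).trans
    (Set.ncard_image_le E.emptyTriangles_finite)

end Setup

instance : Fact (Module.finrank ℝ (EuclideanSpace ℝ (Fin 3)) = 2 + 1) := ⟨by simp⟩

/-- Stereographic chart. -/
def sphereChart (q : SpherePt) : Chart SpherePt q :=
  let e := (stereographic' 2 q)
  let k := Complex.orthonormalBasisOneI.repr.symm
  { φ := fun x => k (e x)
    ψ := fun z => e.symm (k.symm z)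
    hφ := by
      have := e.continuousOn
      rw [stereographic'_source] at this
      exact k.continuous.comp_continuousOn this
    hψ := by
      have := e.continuousOn_symm
      rw [stereographic'_target] at this
      exact (continuousOn_univ.1 this).comp k.symm.continuous
    ne := by
      intro z hz
      have : e.symm (k.symm z) ∈ e.source := e.map_target (by rw [stereographic'_target]; trivial)
      rw [stereographic'_source] at this
      exact this hz
    left := by
      intro x hx
      have : x ∈ e.source := by rw [stereographic'_source]; exact hx
      simp [e.left_inv this]
    right := by
      intro z
      have : k.symm z ∈ e.target := by rw [stereographic'_target]; trivial
      rw [e.right_inv this]; simp }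

/-- The topological part. -/
theorem exists_sys {n : ℕ} (D : GoodDrawing n SpherePt) (F : Set SpherePt) (hF : D.FaceConvex F) :
    ∃ Y : Sys n, Y.empt.ncard ≤ D.emptyTriangles.ncard := by
  haveI : LocallyConnectedSpace SpherePt :=
    ChartedSpace.locallyConnectedSpace (EuclideanSpace ℝ (Fin 2)) _
  obtain ⟨⟨q, hq, hFq⟩, hconv⟩ := hF
  have hqa : ∀ u v, u ≠ v → q ∉ D.arc u v := by
    intro u v huv hm
    apply hq
    refine Or.inr ?_
    simp only [mem_iUnion]
    exact ⟨u, mem_univ _, v, mem_univ _, huv, hm⟩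
  obtain ⟨E, rfl, rfl⟩ := exists_setup D q (sphereChart q) hqa
  have hE : E.Conv := by
    intro a b c h
    refine hconv a b c h.1 h.2.2.symm h.2.1 _ ?_ ?_
    · obtain ⟨z, hz⟩ := Setup.ins_nonempty (E := E) h
      exact ⟨z, hz.1, by rw [Setup.ins_eq h hz]⟩
    · intro hs
      have : E.q ∈ F := by rw [hFq]; exact mem_connectedComponentIn hq
      rcases hs this with h1 | h1
      · exact h1.2 (E.W_q a b c)
      · exact Setup.q_tri h h1
  exact ⟨E.toSys hE, Setup.empt_le hE⟩

end FC

end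

section

namespace FC

open Setup (Ds)

namespace Sys

variable {n : ℕ} (Y : Sys n) {a b c d t p q r s v m x : Fin n}

lemma sw (h : Ds a b c) : Y.P a c b ↔ ¬ Y.P a b c := by
  rw [← Y.rot a c b ⟨h.2.2.symm, h.2.1.symm, h.1.symm⟩, Y.swap b c a h.rot, Y.rot a b c h]

lemma rr (h : Ds a b c) : Y.P c a b ↔ Y.P a b c := by
  rw [← Y.rot a b c h, ← Y.rot b c a h.rot]

/-- All vertices distinct from `t`, pairwise distinct. -/
lemma In_iff (h : Ds p q r) (h1 : t ≠ p) (h2 : t ≠ q) (h3 : t ≠ r) :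
    In Y.P p q r t ↔ (Y.P t p q ∧ Y.P t q r ∧ Y.P t r p) ∨
      (¬ Y.P t p q ∧ ¬ Y.P t q r ∧ ¬ Y.P t r p) := by
  unfold In
  rw [Y.rot t p q ⟨h1, h.1, h2.symm⟩, Y.rot t q r ⟨h2, h.2.1, h3.symm⟩,
    Y.rot t r p ⟨h3, h.2.2, h1.symm⟩]

lemma a5 (h : Ds p q r) (hp : s ≠ p) (hq : s ≠ q) (hr : s ≠ r) (h1 : t ≠ p) (h2 : t ≠ q)
    (h3 : t ≠ r) (h4 : t ≠ s) (k1 : Y.P t p q) (k2 : Y.P t q r) (k3 : Y.P t r p) :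
    ¬ (Y.P t s p ∧ Y.P t s q ∧ Y.P t s r) ∧ ¬ (Y.P t p s ∧ Y.P t q s ∧ Y.P t r s) := by
  have hi : In Y.P p q r t := (Y.In_iff h h1 h2 h3).2 (Or.inl ⟨k1, k2, k3⟩)
  have hc := Y.coc p q r s t h hp hq hr h1 h2 h3 h4 hi
  rw [Y.In_iff ⟨h.1, hq.symm, hp⟩ h1 h2 h4, Y.In_iff ⟨h.2.1, hr.symm, hq⟩ h2 h3 h4,
    Y.In_iff ⟨h.2.2, hp.symm, hr⟩ h3 h1 h4] at hc
  have e1 := Y.sw (a := t) (b := p) (c := s) ⟨h1, hp.symm, h4.symm⟩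
  have e2 := Y.sw (a := t) (b := q) (c := s) ⟨h2, hq.symm, h4.symm⟩
  have e3 := Y.sw (a := t) (b := r) (c := s) ⟨h3, hr.symm, h4.symm⟩
  tauto

lemma In_rot : In Y.P a b c d ↔ In Y.P b c a d := by unfold In; tauto

lemma In_swap (h : Ds a b c) (h1 : d ≠ a) (h2 : d ≠ b) (h3 : d ≠ c) :
    In Y.P a b c d ↔ In Y.P b a c d := by
  rw [Y.In_iff h h1 h2 h3, Y.In_iff h.swap h2 h1 h3]
  have e1 := Y.sw (a := d) (b := a) (c := b) ⟨h1, h.1, h2.symm⟩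
  have e2 := Y.sw (a := d) (b := b) (c := c) ⟨h2, h.2.1, h3.symm⟩
  have e3 := Y.sw (a := d) (b := c) (c := a) ⟨h3, h.2.2, h1.symm⟩
  tauto

/-- Core contradiction: hull edge `v m`, `x` on the negative side, positively inside `a b v`. -/
lemma hull_core (hab : a ≠ b) (hav : a ≠ v) (hbv : b ≠ v) (ham : a ≠ m) (hbm : b ≠ m)
    (hvm : v ≠ m) (hxa : x ≠ a) (hxb : x ≠ b) (hxv : x ≠ v) (hxm : x ≠ m)
    (k1 : Y.P v m a) (k2 : Y.P v m b) (k3 : ¬ Y.P v m x)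
    (g1 : Y.P v a x) (g2 : Y.P v x b) (g3 : Y.P v a b) : False := by
  have k3' : Y.P v x m := (Y.sw ⟨hvm, hxm.symm, hxv⟩).2 k3
  exact (Y.a5 (t := v) (p := m) (q := a) (r := x) (s := b) ⟨ham.symm, hxa.symm, hxm⟩ hbm hab.symm
    hxb.symm hvm hav.symm hxv.symm hbv.symm k1 g1 k3').2 ⟨k2, g3, g2⟩

lemma hull_aux (hab : a ≠ b) (hav : a ≠ v) (hbv : b ≠ v)
    (hvm : v ≠ m) (hxa : x ≠ a) (hxb : x ≠ b) (hxv : x ≠ v) (hxm : x ≠ m)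
    (k1 : a ≠ m → Y.P v m a) (k2 : b ≠ m → Y.P v m b) (k3 : ¬ Y.P v m x) :
    ¬ In Y.P a b v x := by
  intro hi
  have hi1 : In Y.P v a b x := by rwa [Y.In_rot]
  have h : Ds v a b := ⟨hav.symm, hab, hbv⟩
  have i1 := Y.imp v a b x h hxv hxa hxb hi1
  have r5 : Y.P b v x ↔ Y.P v x b := Y.rr ⟨hxv.symm, hxb, hbv⟩
  have s1 := Y.sw (a := v) (b := a) (c := x) ⟨hav.symm, hxa.symm, hxv⟩
  have s2 := Y.sw (a := v) (b := b) (c := x) ⟨hbv.symm, hxb.symm, hxv⟩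
  have s3 := Y.sw (a := v) (b := a) (c := b) h
  unfold In at hi
  rw [r5] at hi
  clear r5 hi1
  have all : (Y.P v a x ∧ Y.P v x b ∧ Y.P v a b) ∨ (Y.P v b x ∧ Y.P v x a ∧ Y.P v b a) := by
    rw [s1, s3, i1]
    rcases hi with ⟨-, h1, h2⟩ | ⟨-, h1, h2⟩
    · exact Or.inl ⟨h2, h1, h2⟩
    · exact Or.inr ⟨by tauto, h2, h2⟩
  clear hi
  by_cases ha : a = m
  · subst ha
    have := k2 hab.symm
    tauto
  by_cases hb : b = m
  · subst hb
    have := k1 hab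
    tauto
  rcases all with ⟨g1, g2, g3⟩ | ⟨g1, g2, g3⟩
  · exact Y.hull_core hab hav hbv ha hb hvm hxa hxb hxv hxm (k1 ha) (k2 hb) k3 g1 g2 g3
  · exact Y.hull_core hab.symm hbv hav hb ha hvm hxb hxa hxv hxm (k2 hb) (k1 ha) k3 g1 g2 g3

/-- `v m` is a hull edge of the vertex set `A`. -/
def HullEdge (A : Finset (Fin n)) (v m : Fin n) : Prop :=
  v ∈ A ∧ m ∈ A ∧ v ≠ m ∧ ∀ y ∈ A, y ≠ v → y ≠ m → Y.P v m y

lemma not_In_of_neg {A : Finset (Fin n)} (hx : x ∉ A) (hvm : Y.HullEdge A v m) (hneg : ¬ Y.P v m x)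
    (ha : a ∈ A) (hb : b ∈ A) (hc : c ∈ A) (h : Ds a b c) : ¬ In Y.P a b c x := by
  obtain ⟨hv, hm, hne, hall⟩ := hvm
  have nx : ∀ {y}, y ∈ A → x ≠ y := fun hy e => hx (e ▸ hy)
  have key : ∀ {a b}, a ∈ A → b ∈ A → a ≠ b → a ≠ v → b ≠ v → ¬ In Y.P a b v x := by
    intro a b ha hb hab hav hbv
    exact Y.hull_aux hab hav hbv hne (nx ha) (nx hb) (nx hv) (nx hm) (fun h => hall a ha hav h)
      (fun h => hall b hb hbv h) hneg
  intro hi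
  by_cases hav : a = v
  · subst hav
    rw [Y.In_rot] at hi
    exact key hb hc h.2.1 h.1.symm h.2.2 hi
  by_cases hbv : b = v
  · subst hbv
    rw [Y.In_rot, Y.In_rot] at hi
    exact key hc ha h.2.2 h.2.1.symm h.1 hi
  by_cases hcv : c = v
  · subst hcv
    exact key ha hb h.1 hav hbv hi
  rcases Y.coc a b c v x h (Ne.symm hav) (Ne.symm hbv) (Ne.symm hcv) (nx ha) (nx hb) (nx hc) (nx hv) hi
    with h1 | h1 | h1
  · exact key ha hb h.1 hav hbv h1
  · exact key hb hc h.2.1 hbv hcv h1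
  · exact key hc ha h.2.2 hcv hav h1

/-- A transitive tournament-like relation on a finite nonempty set has a source. -/
lemma exists_source {α : Type*} [DecidableEq α] (R : α → α → Prop) (A : Finset α) (hA : A.Nonempty)
    (htot : ∀ a ∈ A, ∀ b ∈ A, a ≠ b → R a b ∨ R b a)
    (htr : ∀ a ∈ A, ∀ b ∈ A, ∀ c ∈ A, a ≠ b → b ≠ c → a ≠ c → R a b → R b c → R a c) :
    ∃ m ∈ A, ∀ y ∈ A, y ≠ m → R m y := by
  induction hA using Finset.Nonempty.cons_induction with
  | singleton a => exact ⟨a, by simp, by simp⟩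
  | cons a B ha hB ih =>
    obtain ⟨m, hm, hall⟩ := ih
      (fun a ha b hb => htot a (Finset.mem_cons_of_mem ha) b (Finset.mem_cons_of_mem hb))
      (fun a ha b hb c hc => htr a (Finset.mem_cons_of_mem ha) b (Finset.mem_cons_of_mem hb) c
        (Finset.mem_cons_of_mem hc))
    have hma : m ≠ a := fun e => ha (e ▸ hm)
    rcases htot m (Finset.mem_cons_of_mem hm) a (Finset.mem_cons_self _ _) hma with h | h
    · refine ⟨m, Finset.mem_cons_of_mem hm, ?_⟩
      intro y hy hym
      rcases Finset.mem_cons.1 hy with rfl | hy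
      · exact h
      · exact hall y hy hym
    · refine ⟨a, Finset.mem_cons_self _ _, ?_⟩
      intro y hy hya
      rcases Finset.mem_cons.1 hy with rfl | hy
      · exact absurd rfl hya
      · by_cases hym : y = m
        · rw [hym]; exact h
        · exact htr a (Finset.mem_cons_self _ _) m (Finset.mem_cons_of_mem hm) y
            (Finset.mem_cons_of_mem hy) hma.symm (Ne.symm hym) (Ne.symm hya) h (hall y hy hym)

lemma exists_hullEdge (A : Finset (Fin n)) (hA : 2 ≤ A.card) : ∃ v m, Y.HullEdge A v m := by
  induction A using Finset.induction_on with
  | empty => simp at hA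
  | insert x A hx ih =>
    rw [Finset.card_insert_of_notMem hx] at hA
    by_cases h2 : 2 ≤ A.card
    · obtain ⟨v, m, hvm⟩ := ih h2
      by_cases hpos : Y.P v m x
      · refine ⟨v, m, Finset.mem_insert_of_mem hvm.1, Finset.mem_insert_of_mem hvm.2.1, hvm.2.2.1, ?_⟩
        intro y hy hyv hym
        rcases Finset.mem_insert.1 hy with rfl | hy
        · exact hpos
        · exact hvm.2.2.2 y hy hyv hym
      · have nx : ∀ {y}, y ∈ A → x ≠ y := fun hy e => hx (e ▸ hy)
        have htot : ∀ a ∈ A, ∀ b ∈ A, a ≠ b → Y.P x a b ∨ Y.P x b a := by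
          intro a ha b hb hab
          have := Y.sw (a := x) (b := a) (c := b) ⟨nx ha, hab, (nx hb).symm⟩
          tauto
        obtain ⟨k, hk, hall⟩ := exists_source (fun a b => Y.P x a b) A ⟨v, hvm.1⟩ htot (by
          intro a ha b hb c hc hab hbc hac h1 h2
          have h : Ds a b c := ⟨hab, hbc, hac.symm⟩
          have hn := Y.not_In_of_neg hx hvm hpos ha hb hc h
          rw [Y.In_iff h (nx ha) (nx hb) (nx hc)] at hn
          have := htot a ha c hc hac
          tauto)
        refine ⟨x, k, Finset.mem_insert_self _ _, Finset.mem_insert_of_mem hk, nx hk, ?_⟩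
        intro y hy hyx hyk
        rcases Finset.mem_insert.1 hy with rfl | hy
        · exact absurd rfl hyx
        · exact hall y hy hyk
    · have h1 : A.card = 1 := by omega
      obtain ⟨y, rfl⟩ := Finset.card_eq_one.1 h1
      have hxy : x ≠ y := by simpa using hx
      refine ⟨x, y, by simp, by simp, hxy, ?_⟩
      intro z hz hzx hzy
      simp at hz; tauto

lemma exists_extreme (hn : 2 ≤ n) : ∃ v, ∀ a b c, Ds a b c → v ≠ a → v ≠ b → v ≠ c →
    ¬ In Y.P a b c v := by
  obtain ⟨v, m, -, -, hvm, hall⟩ := Y.exists_hullEdge Finset.univ (by simpa using hn)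
  have hall' : ∀ y, y ≠ v → y ≠ m → Y.P v m y := fun y h1 h2 => hall y (Finset.mem_univ _) h1 h2
  refine ⟨v, ?_⟩
  have key : ∀ a b c, Ds a b c → v ≠ a → v ≠ b → v ≠ c →
      ¬ (Y.P v a b ∧ Y.P v b c ∧ Y.P v c a) := by
    rintro a b c h ha hb hc ⟨h1, h2, h3⟩
    have aux : ∀ a, v ≠ a → a ≠ m → ¬ Y.P v a m := by
      intro a ha ham
      rw [Y.sw ⟨hvm, ham.symm, ha.symm⟩, not_not]
      exact hall' a ha.symm ham
    by_cases ham : a = m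
    · subst ham; exact aux c hc h.2.2 h3
    by_cases hbm : b = m
    · subst hbm; exact aux a ha ham h1
    by_cases hcm : c = m
    · subst hcm; exact aux b hb hbm h2
    exact (Y.a5 h (Ne.symm ham) (Ne.symm hbm) (Ne.symm hcm) ha hb hc hvm h1 h2 h3).1
      ⟨hall' a ha.symm ham, hall' b hb.symm hbm, hall' c hc.symm hcm⟩
  intro a b c h ha hb hc hi
  rw [Y.In_iff h ha hb hc] at hi
  rcases hi with hi | hi
  · exact key a b c h ha hb hc hi
  · refine key b a c h.swap hb ha hc ?_
    have e1 := Y.sw (a := v) (b := a) (c := b) ⟨ha, h.1, hb.symm⟩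
    have e2 := Y.sw (a := v) (b := b) (c := c) ⟨hb, h.2.1, hc.symm⟩
    have e3 := Y.sw (a := v) (b := c) (c := a) ⟨hc, h.2.2, ha.symm⟩
    tauto

end Sys

/-- Orientation systems sorted around an extreme vertex. -/
structure Sys2 (N : ℕ) where
  R : Fin N → Fin N → Fin N → Prop
  rot : ∀ a b c, Ds a b c → (R b c a ↔ R a b c)
  swap : ∀ a b c, Ds a b c → (R b a c ↔ ¬ R a b c)
  imp : ∀ a b c d, Ds a b c → d ≠ a → d ≠ b → d ≠ c → In R a b c d → (R a b c ↔ R a b d)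
  trans : ∀ x p q r, Ds p q r → (p < x ∧ q < x ∧ r < x) ∨ (x < p ∧ x < q ∧ x < r) →
    R x p q → R x q r → R x p r
  btw : ∀ a b c t, Ds a b c → In R a b c t → ¬ (t < a ∧ t < b ∧ t < c) ∧ ¬ (a < t ∧ b < t ∧ c < t)

/-- Empty triangles of a sorted system. -/
def Sys2.Emp {N : ℕ} (Z : Sys2 N) (a b c : Fin N) : Prop :=
  ∀ d, d ≠ a → d ≠ b → d ≠ c → ¬ In Z.R a b c d

lemma enum_sto {α : Type*} [Fintype α] (lt : α → α → Prop) [IsStrictTotalOrder α lt] {N : ℕ}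
    (hN : Fintype.card α = N) : ∃ o : Fin N ≃ α, ∀ i j, i < j → lt (o i) (o j) := by
  classical
  letI : LinearOrder α := linearOrderOfSTO lt
  let o : Fin N ≃o α := Fintype.orderIsoFinOfCardEq α hN
  exact ⟨o.toEquiv, fun i j hij => o.strictMono hij⟩

lemma Sys.exists_enum {n N : ℕ} (Y : Sys n) (hN : n = N + 1) (v : Fin n)
    (hv : ∀ a b c, Ds a b c → v ≠ a → v ≠ b → v ≠ c → ¬ In Y.P a b c v) :
    ∃ e : Fin N → Fin n, Function.Injective e ∧ (∀ i, e i ≠ v) ∧ (∀ x, x ≠ v → ∃ i, e i = x) ∧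
      ∀ i j, i < j → Y.P v (e i) (e j) := by
  classical
  let α := {x : Fin n // x ≠ v}
  let lt : α → α → Prop := fun x y => x ≠ y ∧ Y.P v x y
  have tri : ∀ x y : α, x ≠ y → (Y.P v y x ↔ ¬ Y.P v x y) := fun x y h =>
    Y.sw ⟨x.2.symm, fun e => h (Subtype.ext e), y.2⟩
  haveI : IsStrictTotalOrder α lt :=
    { trichotomous := by
        intro x y h1 h2
        by_contra hne
        have := tri x y hne
        have hne' := Ne.symm hne
        simp only [lt] at h1 h2
        tauto
      irrefl := fun x h => h.1 rfl
      trans := by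
        rintro x y z ⟨h1, h2⟩ ⟨h3, h4⟩
        have hxz : x ≠ z := by
          rintro rfl
          have := tri x y h1
          tauto
        refine ⟨hxz, ?_⟩
        have hd : Ds x.1 y.1 z.1 := ⟨fun e => h1 (Subtype.ext e), fun e => h3 (Subtype.ext e),
          fun e => hxz (Subtype.ext e.symm)⟩
        have := hv _ _ _ hd x.2.symm y.2.symm z.2.symm
        rw [Y.In_iff hd x.2.symm y.2.symm z.2.symm] at this
        have := tri x z hxz
        tauto }
  have hcard : Fintype.card α = N := by
    have : Fintype.card α = n - 1 := by
      simp [α, Fintype.card_subtype_compl]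
    omega
  obtain ⟨o, ho⟩ := enum_sto lt hcard
  refine ⟨fun i => (o i).1, ?_, fun i => (o i).2, ?_, ?_⟩
  · intro i j h
    exact o.injective (Subtype.ext h)
  · intro x hx
    exact ⟨o.symm ⟨x, hx⟩, by simp⟩
  · intro i j hij
    exact (ho i j hij).2

lemma Sys.exists_sys2 {n N : ℕ} (Y : Sys n) (hn : 2 ≤ n) (hN : n = N + 1) :
    ∃ (Z : Sys2 N) (e : Fin N → Fin n), Function.Injective e ∧
      ∀ a b c, Ds a b c → Z.Emp a b c → ({e a, e b, e c} : Finset (Fin n)) ∈ Y.empt := by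
  obtain ⟨v, hv⟩ := Y.exists_extreme hn
  obtain ⟨e, hinj, hev, hsurj, hlt⟩ := Y.exists_enum hN v hv
  have ne : ∀ {i j}, i ≠ j → e i ≠ e j := fun h e' => h (hinj e')
  have ds : ∀ {a b c}, Ds a b c → Ds (e a) (e b) (e c) := fun h => ⟨ne h.1, ne h.2.1, ne h.2.2⟩
  have hgt : ∀ i j, i < j → ¬ Y.P v (e j) (e i) := by
    intro i j hij
    rw [Y.sw ⟨(hev i).symm, ne hij.ne, hev j⟩, not_not]
    exact hlt i j hij
  have dst : ∀ {a b c t}, Ds a b c → In (fun a b c => Y.P (e a) (e b) (e c)) a b c t →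
    (t < a ∧ t < b ∧ t < c) ∨ (a < t ∧ b < t ∧ c < t) → False := by
    intro a b c t h hi hlt'
    have h1 : t ≠ a := by rintro rfl; rcases hlt' with h | h; exact lt_irrefl _ h.1; exact lt_irrefl _ h.1
    have h2 : t ≠ b := by rintro rfl; rcases hlt' with h | h; exact lt_irrefl _ h.2.1; exact lt_irrefl _ h.2.1
    have h3 : t ≠ c := by rintro rfl; rcases hlt' with h | h; exact lt_irrefl _ h.2.2; exact lt_irrefl _ h.2.2
    have aux : ∀ a b, a ≠ b → t ≠ a → t ≠ b → (t < a ∧ t < b) ∨ (a < t ∧ b < t) →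
        ¬ In Y.P (e a) (e b) v (e t) := by
      intro a b hab hta htb hh hin
      have r1 : Y.P (e b) v (e t) ↔ Y.P v (e t) (e b) :=
        (Y.rr ⟨(hev t).symm, ne htb, hev b⟩)
      unfold In at hin
      rw [r1] at hin
      rcases hh with ⟨g1, g2⟩ | ⟨g1, g2⟩
      · have := hgt _ _ g1
        have := hlt _ _ g2
        tauto
      · have := hlt _ _ g1
        have := hgt _ _ g2
        tauto
    rcases Y.coc (e a) (e b) (e c) v (e t) (ds h) (hev a).symm (hev b).symm (hev c).symm (ne h1)
      (ne h2) (ne h3) (hev t) hi with k | k | k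
    · exact aux a b h.1 h1 h2 (by tauto) k
    · exact aux b c h.2.1 h2 h3 (by tauto) k
    · exact aux c a h.2.2 h3 h1 (by tauto) k
  let Z : Sys2 N :=
    { R := fun a b c => Y.P (e a) (e b) (e c)
      rot := fun a b c h => Y.rot _ _ _ (ds h)
      swap := fun a b c h => Y.swap _ _ _ (ds h)
      imp := fun a b c d h h1 h2 h3 hi => Y.imp _ _ _ _ (ds h) (ne h1) (ne h2) (ne h3) hi
      trans := by
        intro x p q r h hx h1 h2
        have g1 : x ≠ p := by rintro rfl; rcases hx with h | h; exact lt_irrefl _ h.1; exact lt_irrefl _ h.1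
        have g2 : x ≠ q := by rintro rfl; rcases hx with h | h; exact lt_irrefl _ h.2.1; exact lt_irrefl _ h.2.1
        have g3 : x ≠ r := by rintro rfl; rcases hx with h | h; exact lt_irrefl _ h.2.2; exact lt_irrefl _ h.2.2
        by_contra hcon
        have h3 : Y.P (e x) (e r) (e p) := (Y.sw ⟨ne g1, ne h.2.2.symm, ne g3.symm⟩).2 hcon
        have := Y.a5 (ds h) (hev p).symm (hev q).symm (hev r).symm (ne g1) (ne g2) (ne g3) (hev x)
          h1 h2 h3
        have e1 : ∀ y, x ≠ y → (Y.P (e x) v (e y) ↔ Y.P v (e y) (e x)) := fun y hy =>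
          Y.rr ⟨(hev y).symm, ne hy.symm, hev x⟩
        have e2 : ∀ y, x ≠ y → (Y.P (e x) (e y) v ↔ Y.P v (e x) (e y)) := fun y hy =>
          Y.rot _ _ _ ⟨(hev x).symm, ne hy, hev y⟩
        rw [e1 p g1, e1 q g2, e1 r g3, e2 p g1, e2 q g2, e2 r g3] at this
        rcases hx with ⟨k1, k2, k3⟩ | ⟨k1, k2, k3⟩
        · exact this.1 ⟨hlt _ _ k1, hlt _ _ k2, hlt _ _ k3⟩
        · exact this.2 ⟨hlt _ _ k1, hlt _ _ k2, hlt _ _ k3⟩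
      btw := fun a b c t h hi => ⟨fun k => dst h hi (Or.inl k), fun k => dst h hi (Or.inr k)⟩ }
  refine ⟨Z, e, hinj, ?_⟩
  intro a b c h hE
  refine ⟨e a, e b, e c, ds h, rfl, ?_⟩
  intro d h1 h2 h3 hi
  by_cases hd : d = v
  · subst hd; exact hv _ _ _ (ds h) h1 h2 h3 hi
  obtain ⟨i, rfl⟩ := hsurj d hd
  exact hE i (fun k => h1 (by rw [k])) (fun k => h2 (by rw [k])) (fun k => h3 (by rw [k])) hi

end FC

end

section

namespace FC

open Setup (Ds)

/-- `t` is strictly between `x` and `y`. -/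
def Btw {N : ℕ} (x y t : Fin N) : Prop := (x < t ∧ t < y) ∨ (y < t ∧ t < x)

lemma Btw.symm {N : ℕ} {x y t : Fin N} (h : Btw x y t) : Btw y x t := Or.symm h

lemma Btw.ds {N : ℕ} {x y t : Fin N} (h : Btw x y t) : Ds x t y := by
  rcases h with ⟨h1, h2⟩ | ⟨h1, h2⟩
  · exact ⟨h1.ne, h2.ne, (h1.trans h2).ne'⟩
  · exact ⟨h2.ne', h1.ne', (h1.trans h2).ne⟩

namespace Sys2

variable {N : ℕ} (Z : Sys2 N) {a b c d t p q r s x y : Fin N}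

lemma sw (h : Ds a b c) : Z.R a c b ↔ ¬ Z.R a b c := by
  rw [← Z.rot a c b ⟨h.2.2.symm, h.2.1.symm, h.1.symm⟩, Z.swap b c a h.rot, Z.rot a b c h]

lemma rr (h : Ds a b c) : Z.R c a b ↔ Z.R a b c := by
  rw [← Z.rot a b c h, ← Z.rot b c a h.rot]

lemma rev (h : Ds a b c) : Z.R c b a ↔ ¬ Z.R a b c := by
  rw [Z.swap b c a h.rot, Z.rot a b c h]

lemma In_rev (h : Ds a b c) (h1 : d ≠ a) (h2 : d ≠ b) (h3 : d ≠ c)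
    (hi : In Z.R c b a d) : In Z.R a b c d := by
  unfold In at hi ⊢
  rw [Z.swap b c d ⟨h.2.1, h3.symm, h2⟩, Z.swap a b d ⟨h.1, h2.symm, h1⟩,
    Z.swap c a d ⟨h.2.2, h1.symm, h3⟩] at hi
  tauto

lemma Emp_rev (h : Ds a b c) (hE : Z.Emp a b c) : Z.Emp c b a := fun d h1 h2 h3 hi =>
  hE d h3 h2 h1 (Z.In_rev h h3 h2 h1 hi)

lemma In_facts (hb : Btw x y r) (hr : Z.R x r y) (hx : t ≠ x) (hy : t ≠ y) (htr : t ≠ r)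
    (hi : In Z.R x r y t) : Btw x y t ∧ Z.R x t y ∧ ¬ Z.R x t r ∧ ¬ Z.R y r t := by
  have h := hb.ds
  have h1 := Z.imp x r y t h hx htr hy hi
  have h2 := Z.btw x r y t h hi
  have hbt : Btw x y t := by
    unfold Btw at hb ⊢
    omega
  have g1 : Z.R x r t := h1.1 hr
  have g2 : Z.R r y t ∧ Z.R y x t := by
    unfold In at hi; tauto
  refine ⟨hbt, ?_, ?_, ?_⟩
  · rw [← Z.rr ⟨hx.symm, hy, h.2.2⟩]; exact g2.2
  · rw [Z.sw ⟨h.1, htr.symm, hx⟩, not_not]; exact g1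
  · rw [Z.swap r y t ⟨h.2.1, hy.symm, htr⟩, not_not]; exact g2.1

/-- Existence of the two candidate empty triangles on one side. -/
lemma exists_pair (hb : Btw x y s) (hs : Z.R x s y) :
    (∃ r, Btw x y r ∧ Z.R x r y ∧ Z.Emp x r y ∧ ∀ t, Btw x y t → Z.R x t y → t ≠ r → Z.R x t r) ∧
    (∃ r, Btw x y r ∧ Z.R x r y ∧ Z.Emp x r y ∧ ∀ t, Btw x y t → Z.R x t y → t ≠ r → Z.R y r t) := by
  classical
  let A : Finset (Fin N) := Finset.univ.filter fun t => Btw x y t ∧ Z.R x t y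
  have hA : ∀ t, t ∈ A ↔ Btw x y t ∧ Z.R x t y := by simp [A]
  have hne : A.Nonempty := ⟨s, (hA s).2 ⟨hb, hs⟩⟩
  constructor
  · obtain ⟨r, hr, hall⟩ := Sys.exists_source (fun a b => Z.R x b a) A hne (by
      intro a ha b hb hab
      have := Z.sw (a := x) (b := a) (c := b)
        ⟨((hA a).1 ha).1.ds.1, hab, ((hA b).1 hb).1.ds.1.symm⟩
      tauto) (by
      intro a ha b hb c hc hab hbc hac h1 h2
      refine Z.trans x c b a ⟨hbc.symm, hab.symm, hac⟩ ?_ h2 h1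
      have h1 := ((hA a).1 ha).1
      have h2 := ((hA b).1 hb).1
      have h3 := ((hA c).1 hc).1
      unfold Btw at h1 h2 h3
      omega)
    rw [hA] at hr
    have hall' : ∀ t, Btw x y t → Z.R x t y → t ≠ r → Z.R x t r :=
      fun t h1 h2 h3 => hall t ((hA t).2 ⟨h1, h2⟩) h3
    refine ⟨r, hr.1, hr.2, ?_, hall'⟩
    intro t h1 h2 h3 hi
    obtain ⟨k1, k2, k3, k4⟩ := Z.In_facts hr.1 hr.2 h1 h3 h2 hi
    exact k3 (hall' t k1 k2 h2)
  · obtain ⟨r, hr, hall⟩ := Sys.exists_source (fun a b => Z.R y a b) A hne (by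
      intro a ha b hb hab
      have := Z.sw (a := y) (b := a) (c := b)
        ⟨((hA a).1 ha).1.ds.2.1.symm, hab, ((hA b).1 hb).1.ds.2.1⟩
      tauto) (by
      intro a ha b hb c hc hab hbc hac h1 h2
      refine Z.trans y a b c ⟨hab, hbc, hac.symm⟩ ?_ h1 h2
      have h1 := ((hA a).1 ha).1
      have h2 := ((hA b).1 hb).1
      have h3 := ((hA c).1 hc).1
      unfold Btw at h1 h2 h3
      omega)
    rw [hA] at hr
    have hall' : ∀ t, Btw x y t → Z.R x t y → t ≠ r → Z.R y r t :=
      fun t h1 h2 h3 => hall t ((hA t).2 ⟨h1, h2⟩) h3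
    refine ⟨r, hr.1, hr.2, ?_, hall'⟩
    intro t h1 h2 h3 hi
    obtain ⟨k1, k2, k3, k4⟩ := Z.In_facts hr.1 hr.2 h1 h3 h2 hi
    exact k4 (hall' t k1 k2 h2)

/-- `(x, y)` is bad with witness `r`. -/
def BadW (x y r : Fin N) : Prop := Btw x y r ∧ (∀ t, Btw x y t → Z.R x t y) ∧
  ∀ t, Btw x y t → t ≠ r → Z.R x t r ∧ Z.R y r t

lemma dichotomy (hb : Btw x y s) : (∃ r, Z.BadW x y r ∨ Z.BadW y x r) ∨
    ∃ r r', r ≠ r' ∧ Btw x y r ∧ Btw x y r' ∧ Z.Emp x r y ∧ Z.Emp x r' y := by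
  have one : ∀ {x y s}, Btw x y s → (∀ t, Btw x y t → Z.R x t y) → (∃ r, Z.BadW x y r) ∨
    ∃ r r', r ≠ r' ∧ Btw x y r ∧ Btw x y r' ∧ Z.Emp x r y ∧ Z.Emp x r' y := by
    intro x y s hb hall
    obtain ⟨⟨r, a1, a2, a3, a4⟩, ⟨r', b1, b2, b3, b4⟩⟩ := Z.exists_pair hb (hall s hb)
    by_cases hr : r = r'
    · subst hr
      exact Or.inl ⟨r, a1, hall, fun t h1 h2 => ⟨a4 t h1 (hall t h1) h2, b4 t h1 (hall t h1) h2⟩⟩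
    · exact Or.inr ⟨r, r', hr, a1, b1, a3, b3⟩
  by_cases h1 : ∀ t, Btw x y t → Z.R x t y
  · rcases one hb h1 with ⟨r, h⟩ | h
    · exact Or.inl ⟨r, Or.inl h⟩
    · exact Or.inr h
  by_cases h2 : ∀ t, Btw x y t → ¬ Z.R x t y
  · have h2' : ∀ t, Btw y x t → Z.R y t x := fun t ht => (Z.rev ht.symm.ds).2 (h2 t ht.symm)
    rcases one hb.symm h2' with ⟨r, h⟩ | ⟨r, r', k1, k2, k3, k4, k5⟩
    · exact Or.inl ⟨r, Or.inr h⟩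
    · exact Or.inr ⟨r, r', k1, k2.symm, k3.symm, Z.Emp_rev k2.ds k4, Z.Emp_rev k3.ds k5⟩
  push Not at h1 h2
  obtain ⟨t, ht, ht'⟩ := h1
  obtain ⟨u, hu, hu'⟩ := h2
  obtain ⟨⟨r, a1, a2, a3, a4⟩, -⟩ := Z.exists_pair hu hu'
  obtain ⟨⟨r', b1, b2, b3, b4⟩, -⟩ := Z.exists_pair ht.symm ((Z.rev ht.ds).2 ht')
  refine Or.inr ⟨r, r', ?_, a1, b1.symm, a3, Z.Emp_rev b1.ds b3⟩
  rintro rfl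
  exact (Z.rev b1.ds).1 a2 b2

lemma exists_one (hb : Btw x y s) : ∃ r, Btw x y r ∧ Z.Emp x r y := by
  by_cases h : Z.R x s y
  · obtain ⟨⟨r, a1, a2, a3, a4⟩, -⟩ := Z.exists_pair hb h
    exact ⟨r, a1, a3⟩
  · obtain ⟨⟨r, b1, b2, b3, b4⟩, -⟩ := Z.exists_pair hb.symm ((Z.rev hb.ds).2 h)
    exact ⟨r, b1.symm, Z.Emp_rev b1.ds b3⟩

lemma bad_unique_left {y' r' : Fin N} (h : Z.BadW x y r) (h' : Z.BadW x y' r')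
    (hy : Btw x y' y) (hr : Btw x y r') : False := by
  have hr2 : Btw x y' r := by
    have := h.1; unfold Btw at *; omega
  by_cases e : r = r'
  · subst e
    have k1 := (h'.2.2 y hy hr.ds.2.1.symm).1
    have k2 := h.2.1 r h.1
    exact (Z.sw hr.ds).1 k1 k2
  · have k1 := (h.2.2 r' hr (Ne.symm e)).1
    have k2 := (h'.2.2 r hr2 e).1
    exact (Z.sw ⟨hr.ds.1, Ne.symm e, hr2.ds.1.symm⟩).1 k2 k1

lemma bad_unique_right {x' r' : Fin N} (h : Z.BadW x y r) (h' : Z.BadW x' y r')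
    (hx : Btw x' y x) (hr : Btw x y r') : False := by
  have hr2 : Btw x' y r := by
    have := h.1; unfold Btw at *; omega
  by_cases e : r = r'
  · subst e
    have k1 := (h'.2.2 x hx hr.ds.1).2
    have k2 := h.2.1 r h.1
    rw [← Z.rr hr.ds] at k2
    exact (Z.sw hr.ds.rot.rot).1 k1 k2
  · have k1 := (h.2.2 r' hr (Ne.symm e)).2
    have k2 := (h'.2.2 r hr2 e).2
    exact (Z.sw ⟨hr.ds.2.1.symm, Ne.symm e, hr2.ds.2.1⟩).1 k1 k2

end Sys2

end FC

end

section

namespace FC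

open Setup (Ds)

/-- The dyadic level separating `p` and `q`. -/
def lvl (L p q : ℕ) : ℕ := Nat.findGreatest (fun j => p / 2 ^ j ≠ q / 2 ^ j) L

lemma lvl_spec {L p q : ℕ} (hpq : p < q) (hq : q < 2 ^ L) :
    lvl L p q < L ∧ q / 2 ^ lvl L p q = p / 2 ^ lvl L p q + 1 := by
  have h0 : p / 2 ^ 0 ≠ q / 2 ^ 0 := by simpa using hpq.ne
  have hs : p / 2 ^ lvl L p q ≠ q / 2 ^ lvl L p q :=
    Nat.findGreatest_spec (P := fun j => p / 2 ^ j ≠ q / 2 ^ j) (Nat.zero_le L) h0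
  have hle : lvl L p q ≤ L := Nat.findGreatest_le L
  have hlt : lvl L p q < L := by
    refine lt_of_le_of_ne hle fun h => hs ?_
    rw [h, Nat.div_eq_of_lt hq, Nat.div_eq_of_lt (hpq.trans hq)]
  refine ⟨hlt, ?_⟩
  have hn : ¬ (p / 2 ^ (lvl L p q + 1) ≠ q / 2 ^ (lvl L p q + 1)) :=
    Nat.findGreatest_is_greatest (P := fun j => p / 2 ^ j ≠ q / 2 ^ j) (Nat.lt_succ_self _) hlt
  rw [not_not, pow_succ, ← Nat.div_div_eq_div_mul, ← Nat.div_div_eq_div_mul] at hn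
  have : p / 2 ^ lvl L p q ≤ q / 2 ^ lvl L p q := Nat.div_le_div_right hpq.le
  omega

lemma lvl_mid {L p q : ℕ} (hpq : p < q) (hq : q < 2 ^ L) :
    p < (q / 2 ^ lvl L p q) * 2 ^ lvl L p q ∧ (q / 2 ^ lvl L p q) * 2 ^ lvl L p q ≤ q := by
  refine ⟨?_, Nat.div_mul_le_self _ _⟩
  rw [(lvl_spec hpq hq).2]
  rw [mul_comm]
  exact Nat.lt_mul_div_succ p (by positivity)

lemma bad_count {N L : ℕ} (hN : N ≤ 2 ^ L) (W : Fin N → Fin N → Fin N → Prop)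
    (hb : ∀ p q r, p < q → W p q r → p < r ∧ r < q)
    (hA : ∀ p q q' r r', p < q → q < q' → W p q r → W p q' r' → p < r' → r' < q → False)
    (hB : ∀ p p' q r r', p < p' → p' < q → W p' q r' → W p q r → p' < r → r < q → False)
    (K : Finset (Fin N × Fin N)) (hK : ∀ z ∈ K, z.1 < z.2 ∧ ∃ r, W z.1 z.2 r) :
    K.card ≤ 2 * (L * N) := by
  classical
  have hlt : ∀ q : Fin N, (q : ℕ) < 2 ^ L := fun q => q.2.trans_le hN
  let lv : Fin N × Fin N → ℕ := fun z => lvl L z.1 z.2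
  let md : Fin N × Fin N → ℕ := fun z => ((z.2 : ℕ) / 2 ^ lv z) * 2 ^ lv z
  let K1 := K.filter fun z => ∃ r, W z.1 z.2 r ∧ (r : ℕ) < md z
  let K2 := K.filter fun z => ∃ r, W z.1 z.2 r ∧ md z ≤ (r : ℕ)
  have hsub : K ⊆ K1 ∪ K2 := by
    intro z hz
    obtain ⟨h1, r, hr⟩ := hK z hz
    rcases lt_or_ge (r : ℕ) (md z) with h | h
    · exact Finset.mem_union_left _ (Finset.mem_filter.2 ⟨hz, r, hr, h⟩)
    · exact Finset.mem_union_right _ (Finset.mem_filter.2 ⟨hz, r, hr, h⟩)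
  have hspec : ∀ z ∈ K, lv z < L ∧ (z.2 : ℕ) / 2 ^ lv z = (z.1 : ℕ) / 2 ^ lv z + 1 :=
    fun z hz => lvl_spec (hK z hz).1 (hlt _)
  have hmid : ∀ z ∈ K, (z.1 : ℕ) < md z ∧ md z ≤ z.2 :=
    fun z hz => lvl_mid (hK z hz).1 (hlt _)
  have c1 : K1.card ≤ L * N := by
    have : K1.card ≤ (Finset.range L ×ˢ (Finset.univ : Finset (Fin N))).card := by
      apply Finset.card_le_card_of_injOn (fun z => (lv z, z.1))
      · intro z hz
        have hz' := (Finset.mem_filter.1 hz).1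
        simp [(hspec z hz').1]
      · have key : ∀ z ∈ K1, ∀ w ∈ K1, lv z = lv w → z.1 = w.1 → z.2 < w.2 → False := by
          intro z hz w hw hl h1 h2
          obtain ⟨hz, r, hr, hrm⟩ := Finset.mem_filter.1 hz
          obtain ⟨hw, r', hr', hrm'⟩ := Finset.mem_filter.1 hw
          have hmm : md z = md w := by
            simp only [md]
            rw [(hspec z hz).2, (hspec w hw).2, hl, h1]
          have b1 := hb _ _ _ (hK z hz).1 hr
          have b2 := hb _ _ _ (hK w hw).1 hr'
          have m1 := hmid z hz
          rw [← h1] at hr' b2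
          refine hA z.1 z.2 w.2 r r' (hK z hz).1 h2 hr hr' b2.1 ?_
          rw [Fin.lt_def]; omega
        intro z hz w hw h
        have e1 : lv z = lv w := congrArg Prod.fst h
        have e2 : z.1 = w.1 := (Prod.ext_iff.1 h).2
        rcases lt_trichotomy z.2 w.2 with h3 | h3 | h3
        · exact (key z hz w hw e1 e2 h3).elim
        · exact Prod.ext e2 h3
        · exact (key w hw z hz e1.symm e2.symm h3).elim
    simpa using this
  have c2 : K2.card ≤ L * N := by
    have : K2.card ≤ (Finset.range L ×ˢ (Finset.univ : Finset (Fin N))).card := by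
      apply Finset.card_le_card_of_injOn (fun z => (lv z, z.2))
      · intro z hz
        have hz' := (Finset.mem_filter.1 hz).1
        simp [(hspec z hz').1]
      · have key : ∀ z ∈ K2, ∀ w ∈ K2, lv z = lv w → z.2 = w.2 → z.1 < w.1 → False := by
          intro z hz w hw hl h1 h2
          obtain ⟨hz, r, hr, hrm⟩ := Finset.mem_filter.1 hz
          obtain ⟨hw, r', hr', hrm'⟩ := Finset.mem_filter.1 hw
          have hmm : md z = md w := by
            simp only [md]
            rw [hl, h1]
          have b1 := hb _ _ _ (hK z hz).1 hr
          have b2 := hb _ _ _ (hK w hw).1 hr'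
          have m1 := hmid w hw
          have hwl := (hK w hw).1
          rw [← h1] at hr' b2 hwl
          refine hB z.1 w.1 z.2 r r' h2 hwl hr' hr ?_ b1.2
          rw [Fin.lt_def]; omega
        intro z hz w hw h
        have e1 : lv z = lv w := congrArg Prod.fst h
        have e2 : z.2 = w.2 := (Prod.ext_iff.1 h).2
        rcases lt_trichotomy z.1 w.1 with h3 | h3 | h3
        · exact (key z hz w hw e1 e2 h3).elim
        · exact Prod.ext h3 e2
        · exact (key w hw z hz e1.symm e2.symm h3).elim
    simpa using this
  calc K.card ≤ (K1 ∪ K2).card := Finset.card_le_card hsub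
    _ ≤ K1.card + K2.card := Finset.card_union_le _ _
    _ ≤ 2 * (L * N) := by omega

lemma pairs_card (N : ℕ) :
    2 * ((Finset.univ : Finset (Fin N × Fin N)).filter fun z => z.1 < z.2).card + N = N * N := by
  classical
  have h1 := Finset.card_filter_add_card_filter_not (s := (Finset.univ : Finset (Fin N × Fin N)))
    (fun z => z.1 < z.2)
  have h2 : ((Finset.univ : Finset (Fin N × Fin N)).filter fun z => ¬ z.1 < z.2).card =
      ((Finset.univ : Finset (Fin N × Fin N)).filter fun z => z.2 < z.1).card +
      ((Finset.univ : Finset (Fin N × Fin N)).filter fun z => z.1 = z.2).card := by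
    rw [← Finset.card_union_of_disjoint]
    · congr 1
      ext z
      simp [le_iff_lt_or_eq, eq_comm]
    · rw [Finset.disjoint_filter]
      intro z _ h h'
      exact h.ne' h'
  have h3 : ((Finset.univ : Finset (Fin N × Fin N)).filter fun z => z.2 < z.1).card =
      ((Finset.univ : Finset (Fin N × Fin N)).filter fun z => z.1 < z.2).card := by
    apply Finset.card_bij (fun z _ => (z.2, z.1))
    · intro z; simp
    · rintro ⟨a, b⟩ _ ⟨c, d⟩ _ h
      simp at h ⊢; tauto
    · rintro ⟨a, b⟩ h
      exact ⟨(b, a), by simpa using h, rfl⟩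
  have h4 : ((Finset.univ : Finset (Fin N × Fin N)).filter fun z => z.1 = z.2).card = N := by
    have : ((Finset.univ : Finset (Fin N × Fin N)).filter fun z => z.1 = z.2) =
        (Finset.univ : Finset (Fin N)).image fun a => (a, a) := by
      ext ⟨a, b⟩
      simp
    rw [this, Finset.card_image_of_injective _ (fun a b h => (Prod.ext_iff.1 h).1)]
    simp
  simp only [Finset.card_univ, Fintype.card_prod, Fintype.card_fin] at h1
  omega

open Classical in
lemma Sys2.count {N L : ℕ} (Z : Sys2 N) (hN : N ≤ 2 ^ L) :
    N * N ≤ ((Finset.univ : Finset (Fin N × Fin N × Fin N)).filter fun w =>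
      w.1 < w.2.1 ∧ w.2.1 < w.2.2 ∧ Z.Emp w.1 w.2.1 w.2.2).card + 3 * N + 4 * (L * N) := by
  set T := (Finset.univ : Finset (Fin N × Fin N × Fin N)).filter fun w =>
      w.1 < w.2.1 ∧ w.2.1 < w.2.2 ∧ Z.Emp w.1 w.2.1 w.2.2 with hT
  set P := (Finset.univ : Finset (Fin N × Fin N)).filter fun z => z.1 < z.2 with hP
  have hp := pairs_card N
  rw [← hP] at hp
  let S := P.filter fun z => (z.2 : ℕ) = z.1 + 1
  let K1 := P.filter fun z => ∃ r, Z.BadW z.1 z.2 r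
  let K2 := P.filter fun z => ∃ r, Z.BadW z.2 z.1 r
  have hS : S.card ≤ N := by
    have : S.card ≤ (Finset.univ : Finset (Fin N)).card := by
      apply Finset.card_le_card_of_injOn (fun z => z.1) (by simp)
      intro z hz w hw h
      have h1 := (Finset.mem_filter.1 hz).2
      have h2 := (Finset.mem_filter.1 hw).2
      have h : z.1 = w.1 := h
      refine Prod.ext h (Fin.ext ?_)
      rw [h1, h2, h]
    simpa using this
  have hK1 : K1.card ≤ 2 * (L * N) := by
    apply bad_count hN (fun p q r => Z.BadW p q r)
    · intro p q r hpq h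
      have := h.1
      unfold Btw at this; omega
    · intro p q q' r r' h1 h2 h3 h4 h5 h6
      exact Z.bad_unique_left h3 h4 (Or.inl ⟨h1, h2⟩) (Or.inl ⟨h5, h6⟩)
    · intro p p' q r r' h1 h2 h3 h4 h5 h6
      exact Z.bad_unique_right h3 h4 (Or.inl ⟨h1, h2⟩) (Or.inl ⟨h5, h6⟩)
    · intro z hz
      have := Finset.mem_filter.1 hz
      exact ⟨(Finset.mem_filter.1 this.1).2, this.2⟩
  have hK2 : K2.card ≤ 2 * (L * N) := by
    apply bad_count hN (fun p q r => Z.BadW q p r)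
    · intro p q r hpq h
      have := h.1
      unfold Btw at this; omega
    · intro p q q' r r' h1 h2 h3 h4 h5 h6
      exact Z.bad_unique_right h3 h4 (Or.inr ⟨h1, h2⟩) (Or.inr ⟨h5, h6⟩)
    · intro p p' q r r' h1 h2 h3 h4 h5 h6
      exact Z.bad_unique_left h3 h4 (Or.inr ⟨h1, h2⟩) (Or.inr ⟨h5, h6⟩)
    · intro z hz
      have := Finset.mem_filter.1 hz
      exact ⟨(Finset.mem_filter.1 this.1).2, this.2⟩
  have hTP : ∀ w ∈ T, ((w.1, w.2.2) : Fin N × Fin N) ∈ P := by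
    intro w hw
    have := (Finset.mem_filter.1 hw).2
    exact Finset.mem_filter.2 ⟨Finset.mem_univ _, this.1.trans this.2.1⟩
  have hfib := Finset.card_eq_sum_card_fiberwise (f := fun w : Fin N × Fin N × Fin N => (w.1, w.2.2))
    (s := T) (t := P) hTP
  have hpt : ∀ z ∈ P, 2 ≤ (T.filter fun w => (w.1, w.2.2) = z).card +
      (2 * (if (z.2 : ℕ) = z.1 + 1 then 1 else 0) + ((if ∃ r, Z.BadW z.1 z.2 r then 1 else 0) +
      (if ∃ r, Z.BadW z.2 z.1 r then 1 else 0))) := by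
    rintro ⟨p, q⟩ hz
    have hpq : p < q := (Finset.mem_filter.1 hz).2
    by_cases hs : (q : ℕ) = p + 1
    · simp only [hs, if_true]; omega
    have hmem : ∀ r, Btw p q r → Z.Emp p r q → (p, r, q) ∈ T.filter fun w => (w.1, w.2.2) = (p, q) := by
      intro r h1 h2
      have : p < r ∧ r < q := by unfold Btw at h1; omega
      simp [hT, this.1, this.2, h2]
    have hbt : Btw p q ⟨p + 1, by omega⟩ := by
      left
      rw [Fin.lt_def, Fin.lt_def]
      constructor
      · simp
      · have : (p : ℕ) < q := hpq
        simp only; omega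
    rcases Z.dichotomy hbt with ⟨r, h⟩ | ⟨r, r', h1, h2, h3, h4, h5⟩
    · obtain ⟨r1, k1, k2⟩ := Z.exists_one hbt
      have : 1 ≤ (T.filter fun w => (w.1, w.2.2) = (p, q)).card :=
        Finset.card_pos.2 ⟨_, hmem r1 k1 k2⟩
      rcases h with h | h
      · have : ∃ r, Z.BadW p q r := ⟨r, h⟩
        rw [if_pos this]; omega
      · have : ∃ r, Z.BadW q p r := ⟨r, h⟩
        rw [if_pos this]; omega
    · have : 1 < (T.filter fun w => (w.1, w.2.2) = (p, q)).card :=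
        Finset.one_lt_card.2 ⟨_, hmem r h2 h4, _, hmem r' h3 h5, by simpa using h1⟩
      omega
  have hsum := Finset.sum_le_sum hpt
  rw [Finset.sum_add_distrib, ← hfib, Finset.sum_add_distrib, Finset.sum_add_distrib,
    ← Finset.mul_sum, ← Finset.card_filter, ← Finset.card_filter, ← Finset.card_filter,
    Finset.sum_const, smul_eq_mul] at hsum
  change P.card * 2 ≤ T.card + (2 * S.card + (K1.card + K2.card)) at hsum
  omega

lemma sorted_triple {N : ℕ} {a b c a' b' c' : Fin N} (h1 : a < b) (h2 : b < c) (h3 : a' < b')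
    (h4 : b' < c') (h : ({a, b, c} : Finset (Fin N)) = {a', b', c'}) :
    a = a' ∧ b = b' ∧ c = c' := by
  have ha : a ∈ ({a', b', c'} : Finset (Fin N)) := by rw [← h]; simp
  have hb : b ∈ ({a', b', c'} : Finset (Fin N)) := by rw [← h]; simp
  have hc : c ∈ ({a', b', c'} : Finset (Fin N)) := by rw [← h]; simp
  simp only [Finset.mem_insert, Finset.mem_singleton] at ha hb hc
  omega

theorem main_count {n L : ℕ} (hn : 2 ≤ n) (hL : n ≤ 2 ^ L) (D : GoodDrawing n SpherePt)
    (F : Set SpherePt) (hF : D.FaceConvex F) :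
    n * n ≤ D.emptyTriangles.ncard + 5 * n + 4 * (L * n) := by
  classical
  obtain ⟨Y, hY⟩ := exists_sys D F hF
  obtain ⟨N, rfl⟩ : ∃ N, n = N + 1 := ⟨n - 1, by omega⟩
  obtain ⟨Z, e, he, hZ⟩ := Y.exists_sys2 hn rfl
  have hc := Z.count (L := L) (by omega)
  set T := (Finset.univ : Finset (Fin N × Fin N × Fin N)).filter fun w =>
      w.1 < w.2.1 ∧ w.2.1 < w.2.2 ∧ Z.Emp w.1 w.2.1 w.2.2 with hT
  have hle : T.card ≤ Y.empt.ncard := by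
    rw [← Set.ncard_coe_finset]
    apply Set.ncard_le_ncard_of_injOn
      (fun w : Fin N × Fin N × Fin N => ({e w.1, e w.2.1, e w.2.2} : Finset (Fin (N + 1))))
    · intro w hw
      obtain ⟨-, h1, h2, h3⟩ := Finset.mem_filter.1 hw
      exact hZ _ _ _ ⟨h1.ne, h2.ne, (h1.trans h2).ne'⟩ h3
    · intro w hw w' hw' h
      obtain ⟨-, h1, h2, h3⟩ := Finset.mem_filter.1 hw
      obtain ⟨-, h1', h2', h3'⟩ := Finset.mem_filter.1 hw'
      have hh : ({w.1, w.2.1, w.2.2} : Finset (Fin N)) = {w'.1, w'.2.1, w'.2.2} := by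
        apply Finset.image_injective he
        simpa [Finset.image_insert] using h
      obtain ⟨k1, k2, k3⟩ := sorted_triple h1 h2 h1' h2' hh
      exact Prod.ext k1 (Prod.ext k2 k3)
  nlinarith

theorem final :
    ∃ c : ℝ, 0 < c ∧ ∀ n : ℕ, 2 ≤ n →
      ∀ (D : GoodDrawing n SpherePt) (F : Set SpherePt), D.FaceConvex F →
        (n : ℝ) ^ 2 - c * n * Real.log n ≤ (D.emptyTriangles.ncard : ℝ) := by
  refine ⟨26, by norm_num, fun n hn D F hF => ?_⟩
  have h := main_count (L := Nat.log 2 n + 1) hn (Nat.lt_pow_succ_log_self (by norm_num) n).le D F hF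
  have hR : (n : ℝ) * n ≤ D.emptyTriangles.ncard + 5 * n + 4 * ((Nat.log 2 n + 1) * n) := by
    exact_mod_cast h
  have hn0 : (2 : ℝ) ≤ n := by exact_mod_cast hn
  have hl2 : (1 / 2 : ℝ) < Real.log 2 := by
    have := Real.log_two_gt_d9; linarith
  have hln : Real.log 2 ≤ Real.log n := Real.log_le_log (by norm_num) hn0
  have hlog : (Nat.log 2 n : ℝ) * Real.log 2 ≤ Real.log n := by
    have : ((2 ^ Nat.log 2 n : ℕ) : ℝ) ≤ n := by
      exact_mod_cast Nat.pow_log_le_self 2 (by omega)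
    rw [← Real.log_pow]
    apply Real.log_le_log (by positivity)
    exact_mod_cast this
  have h1 : (Nat.log 2 n : ℝ) ≤ 2 * Real.log n := by
    have : (0 : ℝ) ≤ Nat.log 2 n := Nat.cast_nonneg _
    nlinarith
  have h2 : (9 : ℝ) + 4 * Nat.log 2 n ≤ 26 * Real.log n := by linarith
  have h3 := mul_le_mul_of_nonneg_right h2 (by linarith : (0 : ℝ) ≤ n)
  nlinarith

end FC

end

/-- A face-convex drawing of `K_n` has at least `n² − c·n·log n` empty triangles. -/
theorem emptyTriangles_of_faceConvex :
    ∃ c : ℝ, 0 < c ∧ ∀ n : ℕ, 2 ≤ n →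
      ∀ (D : GoodDrawing n SpherePt) (F : Set SpherePt), D.FaceConvex F →
        (n : ℝ) ^ 2 - c * n * Real.log n ≤ (D.emptyTriangles.ncard : ℝ) := by
  exact FC.final

end
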